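/- arXiv:1705.03731 — 8 statements merged into one kernel-verified Lean document; each statement's English description precedes it below -/
import Mathlib

section
/- For all real numbers x and y, φ₂ᵈ(x,y) = φ₁ᵈ(x,y) · φ₂ⁿ(x,y). -/
open Real

/-- The second (symmetric) Dirichlet eigenfunction of the equilateral triangle. -/
noncomputable def phi2D (x y : ℝ) : ℝ :=
  sin (2 * π * (5 * x + Real.sqrt 3 * y) / 3) - sin (2 * π * (5 * x - Real.sqrt 3 * y) / 3)
  + sin (2 * π * (x - 3 * Real.sqrt 3 * y) / 3) - sin (2 * π * (x + 3 * Real.sqrt 3 * y) / 3)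
  + sin (4 * π * (2 * x + Real.sqrt 3 * y) / 3) - sin (4 * π * (2 * x - Real.sqrt 3 * y) / 3)

/-- The first Dirichlet eigenfunction of the equilateral triangle. -/
noncomputable def phi1D (x y : ℝ) : ℝ :=
  2 * sin (2 * π * (x + y / Real.sqrt 3)) - 2 * sin (4 * π * y / Real.sqrt 3)
  - 2 * sin (2 * π * (x - y / Real.sqrt 3))

/-- The second (symmetric) Neumann eigenfunction of the equilateral triangle. -/
noncomputable def phi2N (x y : ℝ) : ℝ :=
  2 * cos (2 * π * x / 3) * (cos (2 * π * x / 3) + cos (2 * π * y / Real.sqrt 3)) - 1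

/-!
`φ₂ⁿ` is the sum of the cosines of three linear forms `p`, `q`, `r`, and `φ₁ᵈ` is `-2` times the sum
of the sines of their cyclic differences. When the product is expanded by the product-to-sum
formulas, all terms cancel around the cycle except `sin (2 q - r) + sin (q - 2 r)` and its cyclic
images, which are the six terms of `-φ₂ᵈ`.
-/

lemma sqrt_mul_eq_mul_div_sqrt (a y : ℝ) : √a * y = a * (y / √a) := by
  rw [← mul_comm_div, div_sqrt]

lemma two_mul_sin_sub_mul_cos_add_cos_add_cos (p q r : ℝ) :
    2 * sin (q - r) * (cos p + cos q + cos r)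
      = (sin (p + q - r) - sin (r + p - q)) + (sin q - sin r)
        + (sin (2 * q - r) + sin (q - 2 * r)) := by
  have mul_cos_p : 2 * sin (q - r) * cos p = sin (p + q - r) - sin (r + p - q) := by
    rw [two_mul_sin_mul_cos, show q - r - p = -(r + p - q) by ring, sin_neg,
      show q - r + p = p + q - r by ring]
    ring
  have mul_cos_q : 2 * sin (q - r) * cos q = sin (2 * q - r) - sin r := by
    rw [two_mul_sin_mul_cos, show q - r - q = -r by ring, sin_neg,
      show q - r + q = 2 * q - r by ring]
    ring
  have mul_cos_r : 2 * sin (q - r) * cos r = sin q + sin (q - 2 * r) := by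
    rw [two_mul_sin_mul_cos, show q - r - r = q - 2 * r by ring, sub_add_cancel, add_comm]
  linear_combination mul_cos_p + mul_cos_q + mul_cos_r

lemma two_mul_cyclic_sum_sin_sub_mul_cos_add_cos_add_cos (p q r : ℝ) :
    2 * (sin (q - r) + sin (r - p) + sin (p - q)) * (cos p + cos q + cos r)
      = (sin (2 * q - r) + sin (q - 2 * r)) + (sin (2 * r - p) + sin (r - 2 * p))
        + (sin (2 * p - q) + sin (p - 2 * q)) := by
  linear_combination two_mul_sin_sub_mul_cos_add_cos_add_cos p q r
    + two_mul_sin_sub_mul_cos_add_cos_add_cos q r p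
    + two_mul_sin_sub_mul_cos_add_cos_add_cos r p q

/-- The linear form `p`, the phase of a plane wave of `φ₂ⁿ` whose wave vector is parallel to the
base of the triangle. The wave vectors of `p`, `q`, `r` are rotations of each other by `2π/3`. -/
noncomputable def neumannPhaseP (x : ℝ) : ℝ := 4 * π * x / 3

/-- The linear form `q`, the phase whose wave vector is that of `neumannPhaseP` rotated by
`2π/3`. -/
noncomputable def neumannPhaseQ (x y : ℝ) : ℝ := 2 * π * y / √3 - 2 * π * x / 3

/-- The linear form `r`, the phase whose wave vector is that of `neumannPhaseP` rotated by
`-2π/3`. -/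
noncomputable def neumannPhaseR (x y : ℝ) : ℝ := -(2 * π * y / √3) - 2 * π * x / 3

lemma phi2N_eq_cos_add_cos_add_cos (x y : ℝ) :
    phi2N x y = cos (neumannPhaseP x) + cos (neumannPhaseQ x y) + cos (neumannPhaseR x y) := by
  have hp : cos (neumannPhaseP x) = 2 * cos (2 * π * x / 3) ^ 2 - 1 := by
    rw [← cos_two_mul, neumannPhaseP]
    ring_nf
  have hqr : cos (neumannPhaseQ x y) + cos (neumannPhaseR x y)
      = 2 * cos (2 * π * x / 3) * cos (2 * π * y / √3) := by
    rw [two_mul_cos_mul_cos, ← cos_neg (2 * π * x / 3 - _), ← cos_neg (2 * π * x / 3 + _),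
      neumannPhaseQ, neumannPhaseR]
    ring_nf
  rw [phi2N]
  linear_combination -hp - hqr

lemma phi1D_eq_neg_two_mul_cyclic_sum_sin_sub (x y : ℝ) :
    phi1D x y = -2 * (sin (neumannPhaseQ x y - neumannPhaseR x y)
      + sin (neumannPhaseR x y - neumannPhaseP x)
      + sin (neumannPhaseP x - neumannPhaseQ x y)) := by
  have hqr : neumannPhaseQ x y - neumannPhaseR x y = 4 * π * y / √3 := by
    rw [neumannPhaseQ, neumannPhaseR]
    ring
  have hrp : neumannPhaseR x y - neumannPhaseP x = -(2 * π * (x + y / √3)) := by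
    rw [neumannPhaseR, neumannPhaseP]
    ring
  have hpq : neumannPhaseP x - neumannPhaseQ x y = 2 * π * (x - y / √3) := by
    rw [neumannPhaseP, neumannPhaseQ]
    ring
  rw [phi1D, hqr, hrp, hpq, sin_neg]
  ring

lemma phi2D_eq_neg_cyclic_sum_sin (x y : ℝ) :
    phi2D x y
      = -((sin (2 * neumannPhaseQ x y - neumannPhaseR x y)
            + sin (neumannPhaseQ x y - 2 * neumannPhaseR x y))
          + (sin (2 * neumannPhaseR x y - neumannPhaseP x)
            + sin (neumannPhaseR x y - 2 * neumannPhaseP x))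
          + (sin (2 * neumannPhaseP x - neumannPhaseQ x y)
            + sin (neumannPhaseP x - 2 * neumannPhaseQ x y))) := by
  have h2qr : 2 * neumannPhaseQ x y - neumannPhaseR x y
      = -(2 * π * (x - 3 * √3 * y) / 3) := by
    rw [neumannPhaseQ, neumannPhaseR]
    linear_combination -2 * π * sqrt_mul_eq_mul_div_sqrt 3 y
  have hq2r : neumannPhaseQ x y - 2 * neumannPhaseR x y = 2 * π * (x + 3 * √3 * y) / 3 := by
    rw [neumannPhaseQ, neumannPhaseR]
    linear_combination -2 * π * sqrt_mul_eq_mul_div_sqrt 3 y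
  have h2rp : 2 * neumannPhaseR x y - neumannPhaseP x
      = -(4 * π * (2 * x + √3 * y) / 3) := by
    rw [neumannPhaseR, neumannPhaseP]
    linear_combination 4 * π / 3 * sqrt_mul_eq_mul_div_sqrt 3 y
  have hr2p : neumannPhaseR x y - 2 * neumannPhaseP x = -(2 * π * (5 * x + √3 * y) / 3) := by
    rw [neumannPhaseR, neumannPhaseP]
    linear_combination 2 * π / 3 * sqrt_mul_eq_mul_div_sqrt 3 y
  have h2pq : 2 * neumannPhaseP x - neumannPhaseQ x y = 2 * π * (5 * x - √3 * y) / 3 := by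
    rw [neumannPhaseP, neumannPhaseQ]
    linear_combination 2 * π / 3 * sqrt_mul_eq_mul_div_sqrt 3 y
  have hp2q : neumannPhaseP x - 2 * neumannPhaseQ x y = 4 * π * (2 * x - √3 * y) / 3 := by
    rw [neumannPhaseP, neumannPhaseQ]
    linear_combination 4 * π / 3 * sqrt_mul_eq_mul_div_sqrt 3 y
  rw [phi2D, h2qr, hq2r, h2rp, hr2p, h2pq, hp2q]
  simp only [sin_neg]
  ring

theorem phi2D_eq_phi1D_mul_phi2N : ∀ x y : ℝ, phi2D x y = phi1D x y * phi2N x y := by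
  intro x y
  rw [phi2D_eq_neg_cyclic_sum_sin, phi1D_eq_neg_two_mul_cyclic_sum_sin_sub,
    phi2N_eq_cos_add_cos_add_cos, ← two_mul_cyclic_sum_sin_sub_mul_cos_add_cos_add_cos]
  ring
end

section
/- For every point (x,y) of the open equilateral triangle T_e° one has φ₁ᵈ(x,y) < 0; in particular φ₁ᵈ does not vanish inside the triangle. -/
open Real

/-- The open equilateral triangle with vertices `(0,0)`, `(1,0)`, `(1/2, √3/2)`. -/
def openTriangle : Set (ℝ × ℝ) :=
  {p | 0 < p.2 ∧ p.2 < Real.sqrt 3 * p.1 ∧ p.1 + p.2 / Real.sqrt 3 < 1}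

theorem sin_add_sin_sub_sin_add (u v : ℝ) :
    sin u + sin v - sin (u + v) = 4 * sin (u / 2) * sin (v / 2) * sin ((u + v) / 2) := by
  have hsum : sin u + sin v = 2 * sin ((u + v) / 2) * cos (u / 2 - v / 2) := by
    rw [sin_add_sin, sub_div]
  have hdouble : sin (u + v) = 2 * sin ((u + v) / 2) * cos (u / 2 + v / 2) := by
    rw [← add_div, ← sin_two_mul, mul_div_cancel₀ _ two_ne_zero]
  calc
    sin u + sin v - sin (u + v)
        = 2 * sin ((u + v) / 2) * (cos (u / 2 - v / 2) - cos (u / 2 + v / 2)) := by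
      rw [hsum, hdouble, mul_sub]
    _ = 2 * sin ((u + v) / 2) * (2 * sin (u / 2) * sin (v / 2)) := by
      rw [two_mul_sin_mul_sin]
    _ = 4 * sin (u / 2) * sin (v / 2) * sin ((u + v) / 2) := by ring

theorem sin_add_lt_sin_add_sin {u v : ℝ} (hu : 0 < u) (hv : 0 < v) (huv : u + v < 2 * π) :
    sin (u + v) < sin u + sin v := by
  have hsin {t : ℝ} (ht : 0 < t) (ht' : t < 2 * π) : 0 < sin (t / 2) :=
    sin_pos_of_pos_of_lt_pi (by linarith) (by linarith)
  have hsin_u : 0 < sin (u / 2) := hsin hu (by linarith)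
  have hsin_v : 0 < sin (v / 2) := hsin hv (by linarith)
  have hsin_add : 0 < sin ((u + v) / 2) := hsin (by linarith) huv
  rw [← sub_pos, sin_add_sin_sub_sin_add]
  positivity

/-- `φ₁ᵈ` is negative in the open equilateral triangle; in particular it does not
vanish inside the triangle. -/
theorem phi1D_neg_in_triangle :
    ∀ x y : ℝ, (x, y) ∈ openTriangle → phi1D x y < 0 := by
  rintro x y ⟨(hy : 0 < y), (hyx : y < √3 * x), (hxy : x + y / √3 < 1)⟩
  -- The sides of the triangle lie on the lines `u = 0`, `v = 0` and `u + v = 2 * π`.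
  let u := 4 * π * y / √3
  let v := 2 * π * (x - y / √3)
  have hu : 0 < u := by positivity
  have hv : 0 < v := mul_pos two_pi_pos (sub_pos.2 ((div_lt_iff₀' (by positivity)).2 hyx))
  have hadd : u + v = 2 * π * (x + y / √3) := by ring
  have huv : u + v < 2 * π := hadd ▸ mul_lt_of_lt_one_right two_pi_pos hxy
  calc
    phi1D x y = 2 * (sin (u + v) - (sin u + sin v)) := by rw [phi1D, hadd]; ring
    _ < 0 := mul_neg_of_pos_of_neg two_pos (sub_neg.2 (sin_add_lt_sin_add_sin hu hv huv))
end

section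
/- For every point (x,y) of the closed equilateral triangle T̄_e, φ₂ⁿ(x,y) + 1 = 0 if and only if x = 3/4 or x + √3 y = 3/2. Hence the zero set of φ₂ⁿ + 1 in the triangle consists of the two line segments {x = 3/4} ∩ T̄_e and {x + √3 y = 3/2} ∩ T̄_e, which meet at the boundary point (3/4, √3/4). -/
open Real

/-- The closed equilateral triangle with vertices `(0,0)`, `(1,0)`, `(1/2, √3/2)`. -/
def closedTriangle : Set (ℝ × ℝ) :=
  {p | 0 ≤ p.2 ∧ p.2 ≤ Real.sqrt 3 * p.1 ∧ p.1 + p.2 / Real.sqrt 3 ≤ 1}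

/-- The rectangle `[0, 3/2] × [0, √3/2]` of the points `(x, y)` whose two phases `2πx/3` and
`2πy/√3` both lie in `[0, π]`, where the cosine is injective. -/
def phaseRectangle : Set (ℝ × ℝ) := Set.Icc 0 (3 / 2) ×ˢ Set.Icc 0 (√3 / 2)

lemma cos_add_cos_eq_zero_iff {a b : ℝ} (ha : a ∈ Set.Icc 0 π) (hb : b ∈ Set.Icc 0 π) :
    cos a + cos b = 0 ↔ a + b = π := by
  have hb' : π - b ∈ Set.Icc 0 π := Set.sub_mem_Icc_zero_iff_right.mpr hb
  rw [add_eq_zero_iff_eq_neg, ← cos_pi_sub, injOn_cos.eq_iff ha hb', eq_sub_iff_add_eq]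

lemma cos_eq_zero_iff_eq_pi_div_two {a : ℝ} (ha : a ∈ Set.Icc 0 π) :
    cos a = 0 ↔ a = π / 2 := by
  rw [← add_self_eq_zero, cos_add_cos_eq_zero_iff ha ha, ← two_mul, eq_div_iff two_ne_zero,
    mul_comm]

lemma two_pi_mul_div_mem_Icc {c t : ℝ} (hc : 0 < c) (ht : t ∈ Set.Icc 0 (c / 2)) :
    2 * π * t / c ∈ Set.Icc 0 π := by
  have ht₀ : 0 ≤ t := ht.1
  refine ⟨by positivity, (div_le_iff₀ hc).mpr ?_⟩
  calc
    2 * π * t ≤ 2 * π * (c / 2) := by gcongr; exact ht.2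
    _ = π * c := by ring

lemma phi2N_add_one_eq_zero_iff {x y : ℝ} (h : (x, y) ∈ phaseRectangle) :
    phi2N x y + 1 = 0 ↔ x = 3 / 4 ∨ x + √3 * y = 3 / 2 := by
  have ha : 2 * π * x / 3 ∈ Set.Icc 0 π := two_pi_mul_div_mem_Icc three_pos h.1
  have hb : 2 * π * y / √3 ∈ Set.Icc 0 π := two_pi_mul_div_mem_Icc (by positivity) h.2
  have hvertical : 2 * π * x / 3 = π / 2 ↔ x = 3 / 4 := by
    field_simp
    constructor <;> intro hx <;> linarith
  have hslanted : 2 * π * x / 3 + 2 * π * y / √3 = π ↔ x + √3 * y = 3 / 2 := by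
    have hsum : 2 * π * x / 3 + 2 * π * y / √3 = π * (2 / 3 * (x + √3 * y)) := by
      have hsq : √3 ^ 2 = 3 := sq_sqrt zero_le_three
      field_simp
      linear_combination -y * hsq
    rw [hsum, mul_eq_left₀ pi_ne_zero]
    constructor <;> intro hxy <;> linarith
  simp only [phi2N, sub_add_cancel, mul_eq_zero, two_ne_zero, false_or,
    cos_eq_zero_iff_eq_pi_div_two ha, cos_add_cos_eq_zero_iff ha hb, hvertical, hslanted]

lemma vertical_line_inter_slanted_line :
    {p : ℝ × ℝ | p.1 = 3 / 4} ∩ {p : ℝ × ℝ | p.1 + √3 * p.2 = 3 / 2} = {(3 / 4, √3 / 4)} := by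
  have hsq : √3 * √3 = 3 := mul_self_sqrt zero_le_three
  ext ⟨x, y⟩
  simp only [Set.mem_inter_iff, Set.mem_ofPred_eq, Set.mem_singleton_iff, Prod.mk.injEq]
  refine and_congr_right ?_
  rintro rfl
  rw [← mul_right_inj' (sqrt_ne_zero'.mpr three_pos : √3 ≠ 0) (b := y)]
  constructor <;> intro hy <;> linarith

lemma closedTriangle_subset_phaseRectangle : closedTriangle ⊆ phaseRectangle := by
  rintro ⟨x, y⟩ ⟨hy, hyx, hxy⟩
  have h3 : 0 < √3 := by positivity
  have hyx' : y / √3 ≤ x := (div_le_iff₀' h3).mpr hyx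
  have hy' : 0 ≤ y / √3 := by positivity
  have hhalf : y / √3 ≤ 1 / 2 := by linarith
  refine ⟨⟨by linarith, by linarith⟩, hy, ?_⟩
  calc
    y ≤ √3 * (1 / 2) := (div_le_iff₀' h3).mp hhalf
    _ = √3 / 2 := mul_one_div √3 2

lemma vertical_slanted_crossing_mem_closedTriangle :
    ((3 / 4, √3 / 4) : ℝ × ℝ) ∈ closedTriangle := by
  have h3 : 0 < √3 := by positivity
  refine ⟨by positivity, by linarith, le_of_eq ?_⟩
  field_simp
  norm_num

theorem zero_set_phi2N_plus_one_general {S : Set (ℝ × ℝ)} (hS : S ⊆ phaseRectangle)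
    (hpoint : (3 / 4, √3 / 4) ∈ S) :
    (∀ x y : ℝ, (x, y) ∈ S → (phi2N x y + 1 = 0 ↔ (x = 3 / 4 ∨ x + √3 * y = 3 / 2)))
    ∧ {p ∈ S | phi2N p.1 p.2 + 1 = 0}
        = ({p : ℝ × ℝ | p.1 = 3 / 4} ∩ S) ∪ ({p : ℝ × ℝ | p.1 + √3 * p.2 = 3 / 2} ∩ S)
    ∧ ({p : ℝ × ℝ | p.1 = 3 / 4} ∩ S) ∩ ({p : ℝ × ℝ | p.1 + √3 * p.2 = 3 / 2} ∩ S)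
        = {(3 / 4, √3 / 4)} := by
  refine ⟨fun x y h ↦ phi2N_add_one_eq_zero_iff (hS h), ?_, ?_⟩
  · rw [← Set.union_inter_distrib_right, Set.inter_comm]
    ext p
    exact and_congr_right fun hp ↦ phi2N_add_one_eq_zero_iff (hS hp)
  · rw [← Set.inter_inter_distrib_right, vertical_line_inter_slanted_line,
      Set.inter_eq_left, Set.singleton_subset_iff]
    exact hpoint

/-- On the closed equilateral triangle, `φ₂ⁿ + 1` vanishes exactly on the union of the
two line segments `{x = 3/4}` and `{x + √3 y = 3/2}`, which meet at the boundary
point `(3/4, √3/4)`. -/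
theorem zero_set_phi2N_plus_one :
    (∀ x y : ℝ, (x, y) ∈ closedTriangle →
      (phi2N x y + 1 = 0 ↔ (x = 3 / 4 ∨ x + Real.sqrt 3 * y = 3 / 2)))
    ∧ {p ∈ closedTriangle | phi2N p.1 p.2 + 1 = 0}
        = ({p : ℝ × ℝ | p.1 = 3 / 4} ∩ closedTriangle)
          ∪ ({p : ℝ × ℝ | p.1 + Real.sqrt 3 * p.2 = 3 / 2} ∩ closedTriangle)
    ∧ ({p : ℝ × ℝ | p.1 = 3 / 4} ∩ closedTriangle)
        ∩ ({p : ℝ × ℝ | p.1 + Real.sqrt 3 * p.2 = 3 / 2} ∩ closedTriangle)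
        = {(3 / 4, Real.sqrt 3 / 4)} :=
  zero_set_phi2N_plus_one_general closedTriangle_subset_phaseRectangle
    vertical_slanted_crossing_mem_closedTriangle
end

section
/- The open set {(x,y) ∈ T_e° : φ₂ⁿ(x,y) + 1 ≠ 0} has exactly 3 connected components. -/
/-!
The eigenfunction factors as
`φ₂ⁿ + 1 = 4 cos (2πx/3) cos (π (x/3 + y/√3)) cos (π (x/3 - y/√3))`.
On the open triangle the third factor is positive, and the first two vanish exactly on the lines
`x = 3/4` and `x/3 + y/√3 = 1/2`. Cutting a convex set along hyperplanes leaves convex pieces, one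
for each sign vector of the defining affine forms that is attained. The two lines meet on the
boundary of the triangle, at `(3/4, √3/4)`, so the sign vector `(+, +)` is not attained in the
triangle, whereas the other three are.
-/

open Real

theorem card_connectedComponents_eq_ncard_range {X Y : Type*} [TopologicalSpace X]
    [TopologicalSpace Y] [TotallyDisconnectedSpace Y] {f : X → Y} (hf : Continuous f)
    (hfib : ∀ y, IsPreconnected (f ⁻¹' {y})) :
    Nat.card (ConnectedComponents X) = (Set.range f).ncard := by
  have hinj : Function.Injective hf.connectedComponentsLift := by
    rintro ⟨p⟩ ⟨q⟩ (hpq : f p = f q)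
    exact ConnectedComponents.coe_eq_coe'.2 ((hfib (f q)).subset_connectedComponent rfl hpq)
  rw [← hf.connectedComponentsLift_comp_coe,
    ConnectedComponents.surjective_coe.range_comp, Set.ncard_range_of_injective hinj]

theorem card_connectedComponents_eq_ncard_image {X Y : Type*} [TopologicalSpace X]
    [TopologicalSpace Y] [TotallyDisconnectedSpace Y] {f : X → Y} {S : Set X}
    (hf : ContinuousOn f S) (hfib : ∀ y, IsPreconnected (S ∩ f ⁻¹' {y})) :
    Nat.card (ConnectedComponents S) = (f '' S).ncard := by
  rw [card_connectedComponents_eq_ncard_range hf.domRestrict, Set.range_domRestrict]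
  intro y
  rw [← Topology.IsInducing.subtypeVal.isPreconnected_image, Set.domRestrict_eq,
    Set.preimage_comp, Subtype.image_preimage_coe]
  exact hfib y

section HyperplaneArrangement

variable {ι E : Type*} [AddCommGroup E] [Module ℝ E] [TopologicalSpace E]

/-- The position of a point relative to the arrangement of hyperplanes `ℓ i = 0`: the signs of the
affine forms `ℓ i`. The sets on which it is constant without zero entries are the chambers. -/
noncomputable def signVector (ℓ : ι → E →ᴬ[ℝ] ℝ) (p : E) : ι → SignType :=
  fun i => SignType.sign (ℓ i p)

theorem convex_signVector_preimage_singleton (ℓ : ι → E →ᴬ[ℝ] ℝ) (σ : ι → SignType) :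
    Convex ℝ (signVector ℓ ⁻¹' {σ}) := by
  have hσ : signVector ℓ ⁻¹' {σ} = ⋂ i, ℓ i ⁻¹' (SignType.sign ⁻¹' {σ i}) := by
    ext p
    simp only [Set.mem_preimage, Set.mem_singleton_iff, Set.mem_iInter, signVector, funext_iff]
  rw [hσ]
  exact convex_iInter fun i =>
    (Set.ordConnected_singleton.preimage_mono SignType.sign.monotone).convex.affine_preimage
      (ℓ i).toAffineMap

theorem convex_inter_signVector_preimage_singleton {K : Set E} (hK : Convex ℝ K)
    (ℓ : ι → E →ᴬ[ℝ] ℝ) (σ : ι → SignType) :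
    Convex ℝ ({p ∈ K | ∀ i, ℓ i p ≠ 0} ∩ signVector ℓ ⁻¹' {σ}) := by
  have hne {p : E} (hp : signVector ℓ p = σ) : (∀ i, ℓ i p ≠ 0) ↔ ∀ i, σ i ≠ 0 :=
    forall_congr' fun i => hp ▸ sign_ne_zero.symm
  by_cases hσ : ∀ i, σ i ≠ 0
  · convert hK.inter (convex_signVector_preimage_singleton ℓ σ) using 1
    ext p
    exact and_congr_left fun hp => and_iff_left ((hne hp).2 hσ)
  · convert convex_empty (𝕜 := ℝ) (E := E)
    exact Set.eq_empty_of_forall_notMem fun p hp => hσ ((hne hp.2).1 hp.1.2)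

theorem continuousAt_signVector {ℓ : ι → E →ᴬ[ℝ] ℝ} {p : E} (hp : ∀ i, ℓ i p ≠ 0) :
    ContinuousAt (signVector ℓ) p :=
  continuousAt_pi.2 fun i =>
    (continuousAt_sign_of_ne_zero (hp i)).comp (ℓ i).continuous.continuousAt

theorem card_connectedComponents_convex_diff_hyperplanes [ContinuousAdd E] [ContinuousSMul ℝ E]
    {K : Set E} (hK : Convex ℝ K) (ℓ : ι → E →ᴬ[ℝ] ℝ) :
    Nat.card (ConnectedComponents {p ∈ K | ∀ i, ℓ i p ≠ 0}) =
      (signVector ℓ '' {p ∈ K | ∀ i, ℓ i p ≠ 0}).ncard := by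
  refine card_connectedComponents_eq_ncard_image
    (continuousOn_of_forall_continuousAt fun p hp => continuousAt_signVector hp.2) fun σ => ?_
  exact (convex_inter_signVector_preimage_singleton hK ℓ σ).isPreconnected

end HyperplaneArrangement

theorem cos_pi_mul_eq_zero_iff {u : ℝ} (hu : u ∈ Set.Icc 0 1) :
    cos (π * u) = 0 ↔ u = 1 / 2 := by
  have hmem {v : ℝ} (hv : v ∈ Set.Icc 0 1) : π * v ∈ Set.Icc 0 π :=
    ⟨mul_nonneg pi_nonneg hv.1, mul_le_of_le_one_right pi_nonneg hv.2⟩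
  rw [← cos_pi_div_two, ← mul_one_div, injOn_cos.eq_iff (hmem hu) (hmem (by norm_num)),
    mul_right_inj' pi_ne_zero]

theorem phi2N_add_one (x y : ℝ) :
    phi2N x y + 1 =
      4 * cos (π * (2 * x / 3)) * cos (π * (x / 3 + y / √3)) * cos (π * (x / 3 - y / √3)) := by
  rw [phi2N, cos_add_cos]
  ring_nf

theorem mem_openTriangle_iff {p : ℝ × ℝ} :
    p ∈ openTriangle ↔ 0 < p.2 / √3 ∧ p.2 / √3 < p.1 ∧ p.1 + p.2 / √3 < 1 := by
  have h3 : 0 < √3 := by positivity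
  simp only [openTriangle, Set.mem_ofPred_eq, div_pos_iff_of_pos_right h3, div_lt_iff₀' h3]

theorem convex_openTriangle : Convex ℝ openTriangle := by
  let x := LinearMap.fst ℝ ℝ ℝ
  let t := (√3)⁻¹ • LinearMap.snd ℝ ℝ ℝ
  have h : openTriangle = t ⁻¹' Set.Ioi 0 ∩ ((x - t) ⁻¹' Set.Ioi 0 ∩ (x + t) ⁻¹' Set.Iio 1) := by
    ext p
    simp [mem_openTriangle_iff, x, t, div_eq_inv_mul]
  rw [h]
  exact ((convex_Ioi 0).linear_preimage t).inter
    (((convex_Ioi 0).linear_preimage (x - t)).inter ((convex_Iio 1).linear_preimage (x + t)))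

theorem phi2N_add_one_eq_zero_iff_s6 {p : ℝ × ℝ} (hp : p ∈ openTriangle) :
    phi2N p.1 p.2 + 1 = 0 ↔ p.1 = 3 / 4 ∨ p.1 / 3 + p.2 / √3 = 1 / 2 := by
  obtain ⟨ht, htx, hxt⟩ := mem_openTriangle_iff.1 hp
  have hfst : cos (π * (2 * p.1 / 3)) = 0 ↔ p.1 = 3 / 4 := by
    rw [cos_pi_mul_eq_zero_iff ⟨by linarith, by linarith⟩]
    constructor <;> intro h <;> linarith
  have hsnd : cos (π * (p.1 / 3 + p.2 / √3)) = 0 ↔ p.1 / 3 + p.2 / √3 = 1 / 2 :=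
    cos_pi_mul_eq_zero_iff ⟨by linarith, by linarith⟩
  have hthird : cos (π * (p.1 / 3 - p.2 / √3)) ≠ 0 :=
    (cos_pos_of_mem_Ioo ⟨by nlinarith [pi_pos], by nlinarith [pi_pos]⟩).ne'
  simp only [phi2N_add_one, mul_eq_zero, four_ne_zero, hthird, hfst, hsnd, false_or, or_false]

/-- The affine forms whose zero sets are the two lines making up the nodal set of `φ₂ⁿ + 1` in the
triangle. -/
noncomputable def nodalForm : Fin 2 → (ℝ × ℝ) →ᴬ[ℝ] ℝ :=
  let x := (ContinuousLinearMap.fst ℝ ℝ ℝ).toContinuousAffineMap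
  let y := (ContinuousLinearMap.snd ℝ ℝ ℝ).toContinuousAffineMap
  ![x - .const ℝ (ℝ × ℝ) (3 / 4), (3 : ℝ)⁻¹ • x + (√3)⁻¹ • y - .const ℝ (ℝ × ℝ) (1 / 2)]

theorem nodalForm_zero_apply (p : ℝ × ℝ) : nodalForm 0 p = p.1 - 3 / 4 := by
  simp [nodalForm]

theorem nodalForm_one_apply (p : ℝ × ℝ) : nodalForm 1 p = p.1 / 3 + p.2 / √3 - 1 / 2 := by
  simp [nodalForm, div_eq_inv_mul]

theorem setOf_phi2N_add_one_ne_zero :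
    {p ∈ openTriangle | phi2N p.1 p.2 + 1 ≠ 0} =
      {p ∈ openTriangle | ∀ i, nodalForm i p ≠ 0} := by
  ext p
  refine and_congr_right fun hp => ?_
  rw [Ne, phi2N_add_one_eq_zero_iff_s6 hp, not_or, Fin.forall_fin_two, nodalForm_zero_apply,
    nodalForm_one_apply, sub_ne_zero, sub_ne_zero]

theorem signVector_nodalForm_eq_iff {p : ℝ × ℝ} {a b : SignType} :
    signVector nodalForm p = ![a, b] ↔
      SignType.sign (p.1 - 3 / 4) = a ∧ SignType.sign (p.1 / 3 + p.2 / √3 - 1 / 2) = b := by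
  simp [signVector, funext_iff, Fin.forall_fin_two, nodalForm_zero_apply, nodalForm_one_apply]

theorem signVector_nodalForm_mem_of_mem_openTriangle {p : ℝ × ℝ} (hp : p ∈ openTriangle)
    (hne : ∀ i, nodalForm i p ≠ 0) :
    signVector nodalForm p ∈ ({![1, -1], ![-1, -1], ![-1, 1]} : Set (Fin 2 → SignType)) := by
  simp only [Set.mem_insert_iff, Set.mem_singleton_iff, signVector_nodalForm_eq_iff,
    sign_eq_one_iff, sign_eq_neg_one_iff]
  rw [Fin.forall_fin_two, nodalForm_zero_apply, nodalForm_one_apply] at hne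
  have hnot : ¬(0 < p.1 - 3 / 4 ∧ 0 < p.1 / 3 + p.2 / √3 - 1 / 2) := by
    rintro ⟨hx, hxt⟩
    linarith [hp.2.2]
  rcases hne.1.lt_or_gt with hx | hx <;> rcases hne.2.lt_or_gt with hxt | hxt <;> tauto

theorem vec_mem_image_signVector_nodalForm {x t : ℝ} {a b : SignType} (ht : 0 < t) (htx : t < x)
    (hxt : x + t < 1) (ha : SignType.sign (x - 3 / 4) = a) (ha0 : a ≠ 0)
    (hb : SignType.sign (x / 3 + t - 1 / 2) = b) (hb0 : b ≠ 0) :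
    ![a, b] ∈ signVector nodalForm '' {p ∈ openTriangle | ∀ i, nodalForm i p ≠ 0} := by
  have hdiv : √3 * t / √3 = t := by field_simp
  refine ⟨(x, √3 * t), ⟨mem_openTriangle_iff.2 ?_, ?_⟩, signVector_nodalForm_eq_iff.2 ?_⟩
  · simp only [hdiv]
    exact ⟨ht, htx, hxt⟩
  · simp only [Fin.forall_fin_two, nodalForm_zero_apply, nodalForm_one_apply, hdiv]
    exact ⟨sign_ne_zero.1 (ha ▸ ha0), sign_ne_zero.1 (hb ▸ hb0)⟩
  · simp only [hdiv]
    exact ⟨ha, hb⟩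

theorem image_signVector_nodalForm :
    signVector nodalForm '' {p ∈ openTriangle | ∀ i, nodalForm i p ≠ 0} =
      {![1, -1], ![-1, -1], ![-1, 1]} := by
  refine Set.Subset.antisymm ?_ ?_
  · rintro _ ⟨p, ⟨hp, hne⟩, rfl⟩
    exact signVector_nodalForm_mem_of_mem_openTriangle hp hne
  · rintro _ (rfl | rfl | rfl)
    · apply vec_mem_image_signVector_nodalForm (x := 7 / 8) (t := 1 / 16) <;> norm_num
    · apply vec_mem_image_signVector_nodalForm (x := 1 / 2) (t := 1 / 4) <;> norm_num
    · apply vec_mem_image_signVector_nodalForm (x := 1 / 2) (t := 2 / 5) <;> norm_num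

/-- The linear combination `φ₂ⁿ + 1` of the first two Neumann eigenfunctions of the
equilateral triangle has exactly `3` nodal domains, contradicting the Extended
Courant Property (the Courant bound is `κ = 2`). -/
theorem three_nodal_domains_phi2N_plus_one :
    Nat.card (ConnectedComponents
      ↥{p ∈ openTriangle | phi2N p.1 p.2 + 1 ≠ 0}) = 3 := by
  rw [setOf_phi2N_add_one_ne_zero, card_connectedComponents_convex_diff_hyperplanes
    convex_openTriangle, image_signVector_nodalForm, Set.ncard_eq_toFinset_card']
  decide
end

section
/- Let n ≥ 1 be an integer and let a be a real number with n − 1 < a < n. Then the open set {ξ ∈ ℝⁿ : |ξᵢ| < 1 for all i, and ξ₁² + ⋯ + ξₙ² ≠ a} has exactly 2ⁿ + 1 connected components. -/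
/-!
The sum of squares enters only through a few properties of `G ξ = ∑ ξᵢ²`: it is continuous, depends
only on the `|ξᵢ|`, is monotone on `[0, 1]ⁿ`, is at most `a` on the faces `xᵢ = 0`, and satisfies
`G 0 < a < G 1`. The part of the cube where `G < a` is star-shaped about the origin. A point of the
cube with `G > a` has no vanishing coordinate, so this part splits along the `2ⁿ` open orthants. In
the positive orthant, any two of its points `x` and `y` are joined within it by going up from `x` to
`x ⊔ y` and down again to `y`, and sign changes carry this piece to all the others.
-/

open Set Function

section Topology

theorem isClopen_of_isOpen_of_pairwise_disjoint {X ι : Type*} [TopologicalSpace X]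
    {U : ι → Set X} (hopen : ∀ i, IsOpen (U i)) (hdisj : Pairwise (Disjoint on U))
    (hunion : ⋃ i, U i = univ) (i : ι) : IsClopen (U i) := by
  refine isClopen_of_disjoint_cover_open (b := ⋃ j, ⋃ _ : j ≠ i, U j) (fun x _ => ?_) (hopen i)
    (isOpen_iUnion fun j => isOpen_iUnion fun _ => hopen j)
    (disjoint_iUnion₂_right.mpr fun _ hj => hdisj hj.symm)
  obtain ⟨j, hj⟩ := iUnion_eq_univ_iff.mp hunion x
  rcases eq_or_ne j i with rfl | hji
  · exact Or.inl hj
  · exact Or.inr (mem_iUnion₂_of_mem hji hj)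

theorem isConnected_preimage_coe {X : Type*} [TopologicalSpace X] {S W : Set X}
    (hW : IsConnected W) (hWS : W ⊆ S) : IsConnected ((↑) ⁻¹' W : Set S) := by
  have himage : ((↑) : S → X) '' ((↑) ⁻¹' W) = W := by
    rw [Subtype.image_preimage_coe, inter_eq_right.mpr hWS]
  rw [← himage] at hW
  exact ⟨image_nonempty.mp hW.nonempty,
    Topology.IsInducing.subtypeVal.isPreconnected_image.mp hW.isPreconnected⟩

theorem card_connectedComponents_of_isOpen_of_isConnected {X ι : Type*} [TopologicalSpace X]
    {S : Set X} {V : ι → Set X} (hopen : ∀ i, IsOpen (V i)) (hdisj : Pairwise (Disjoint on V))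
    (hunion : ⋃ i, V i = S) (hconn : ∀ i, IsConnected (V i)) :
    Nat.card (ConnectedComponents S) = Nat.card ι := by
  let U : ι → Set S := fun i => (↑) ⁻¹' V i
  have hUdisj : Pairwise (Disjoint on U) := fun i j hij => (hdisj hij).preimage _
  have hUunion : ⋃ i, U i = univ := by
    rw [← preimage_iUnion, hunion, Subtype.coe_preimage_self]
  have hUclopen : ∀ i, IsClopen (U i) := isClopen_of_isOpen_of_pairwise_disjoint
    (fun i => (hopen i).preimage continuous_subtype_val) hUdisj hUunion
  have hUconn : ∀ i, IsConnected (U i) := fun i =>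
    isConnected_preimage_coe (hconn i) (hunion ▸ subset_iUnion V i)
  exact Nat.card_congr
    (ConnectedComponents.equivOfIsClopenOfIsConnected hUclopen hUdisj hUunion hUconn)

theorem isPreconnected_of_ordConnected_of_supClosed {E : Type*} [AddCommGroup E] [Lattice E]
    [IsOrderedAddMonoid E] [Module ℝ E] [PosSMulMono ℝ E] [TopologicalSpace E]
    [ContinuousAdd E] [ContinuousSMul ℝ E] {s : Set E} (hord : s.OrdConnected)
    (hsup : SupClosed s) : IsPreconnected s := by
  refine isPreconnected_of_forall_pair fun x hx y hy => ?_
  have hxy : x ⊔ y ∈ s := hsup hx hy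
  refine ⟨Icc x (x ⊔ y) ∪ Icc y (x ⊔ y), union_subset (hord.out hx hxy) (hord.out hy hxy),
    Or.inl (left_mem_Icc.mpr le_sup_left), Or.inr (left_mem_Icc.mpr le_sup_right), ?_⟩
  exact IsPreconnected.union (x ⊔ y) (right_mem_Icc.mpr le_sup_left)
    (right_mem_Icc.mpr le_sup_right) (convex_Icc x (x ⊔ y)).isPreconnected
    (convex_Icc y (x ⊔ y)).isPreconnected

end Topology

section Sign

variable {R : Type*} [AddCommGroup R] [LinearOrder R]

theorem exists_intUnits_smul_eq_abs (x : R) : ∃ u : ℤˣ, u • x = |x| := by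
  rcases abs_choice x with h | h
  · exact ⟨1, by rw [one_smul, h]⟩
  · exact ⟨-1, by rw [Units.neg_smul, one_smul, h]⟩

variable [IsOrderedAddMonoid R] {u v : ℤˣ} {x : R}

theorem intUnits_smul_eq_abs_of_pos (hu : 0 < u • x) : u • x = |x| := by
  rcases Int.units_eq_one_or u with rfl | rfl
  · rw [one_smul] at hu ⊢
    exact (abs_of_pos hu).symm
  · rw [Units.neg_smul, one_smul] at hu ⊢
    exact (abs_of_neg (neg_pos.mp hu)).symm

theorem intUnits_eq_of_smul_pos (hu : 0 < u • x) (hv : 0 < v • x) : u = v := by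
  have hx : x ≠ 0 := by
    rintro rfl
    exact hu.ne' (smul_zero u)
  have huv : u • x = v • x :=
    (intUnits_smul_eq_abs_of_pos hu).trans (intUnits_smul_eq_abs_of_pos hv).symm
  exact Units.ext (smul_left_injective ℤ hx huv)

end Sign

section Regions

variable {ι α : Type*} [LinearOrder α] {G : (ι → ℝ) → α} {a : α}

/-- The part of the open cube `(-1, 1)^ι` on which `G` is less than `a`: the inside of the
sphere. -/
def innerRegion (G : (ι → ℝ) → α) (a : α) : Set (ι → ℝ) :=
  {ξ | (∀ i, |ξ i| < 1) ∧ G ξ < a}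

/-- The part of the open cube `(0, 1)^ι` on which `G` exceeds `a`: what remains outside
the sphere near the vertex `1`. -/
def positiveCorner (G : (ι → ℝ) → α) (a : α) : Set (ι → ℝ) :=
  {x | x ∈ univ.pi (fun _ => Ioo (0 : ℝ) 1) ∧ a < G x}

/-- The mirror image of `positiveCorner G a` in the open orthant with sign pattern `s`. Here
`s • ξ` is the coordinatewise product, and as signs are involutions it does not matter that a
preimage is taken rather than an image. -/
def corner (G : (ι → ℝ) → α) (a : α) (s : ι → ℤˣ) : Set (ι → ℝ) :=
  {ξ | s • ξ ∈ positiveCorner G a}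

theorem smul_eq_abs_of_mem_corner {s : ι → ℤˣ} {ξ : ι → ℝ} (hξ : ξ ∈ corner G a s) :
    s • ξ = |ξ| :=
  funext fun i => intUnits_smul_eq_abs_of_pos (hξ.1 i trivial).1

theorem disjoint_innerRegion_corner (habs : ∀ ξ, G |ξ| = G ξ) (s : ι → ℤˣ) :
    Disjoint (innerRegion G a) (corner G a s) :=
  disjoint_left.mpr fun _ hinner hcorner =>
    hinner.2.not_gt (habs _ ▸ smul_eq_abs_of_mem_corner hcorner ▸ hcorner.2)

theorem pairwise_disjoint_corner : Pairwise (Disjoint on corner G a) := fun _ _ hst =>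
  disjoint_left.mpr fun _ hs ht => hst <| funext fun i =>
    intUnits_eq_of_smul_pos (hs.1 i trivial).1 (ht.1 i trivial).1

theorem pos_of_lt_of_apply_update_le [DecidableEq ι] (hmono : MonotoneOn G (Icc 0 1))
    (hface : ∀ i, G (update 1 i 0) ≤ a) {x : ι → ℝ} (hx : x ∈ Icc 0 1) (hax : a < G x) (i : ι) :
    0 < x i := by
  refine (hx.1 i).lt_of_ne' fun hi => hax.not_ge ?_
  have hupdate : (update 1 i 0 : ι → ℝ) ∈ Icc 0 1 :=
    ⟨le_update_iff.mpr ⟨le_rfl, fun _ _ => zero_le_one⟩,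
      update_le_iff.mpr ⟨zero_le_one, fun _ _ => le_rfl⟩⟩
  exact (hmono hx hupdate (le_update_iff.mpr ⟨hi.le, fun j _ => hx.2 j⟩)).trans (hface i)

theorem innerRegion_union_iUnion_corner [DecidableEq ι] (habs : ∀ ξ, G |ξ| = G ξ)
    (hmono : MonotoneOn G (Icc 0 1)) (hface : ∀ i, G (update 1 i 0) ≤ a) :
    innerRegion G a ∪ ⋃ s, corner G a s = {ξ | (∀ i, |ξ i| < 1) ∧ G ξ ≠ a} := by
  ext ξ
  constructor
  · rintro (⟨hcube, hlt⟩ | hcorner)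
    · exact ⟨hcube, hlt.ne⟩
    · obtain ⟨s, hs⟩ := mem_iUnion.mp hcorner
      obtain ⟨hpos, hlt⟩ : |ξ| ∈ positiveCorner G a := smul_eq_abs_of_mem_corner hs ▸ hs
      exact ⟨fun i => (hpos i trivial).2, (habs ξ ▸ hlt).ne'⟩
  · rintro ⟨hcube, hne⟩
    rcases hne.lt_or_gt with hlt | hlt
    · exact Or.inl ⟨hcube, hlt⟩
    · rw [← habs] at hlt
      choose s hs using fun i => exists_intUnits_smul_eq_abs (ξ i)
      have hsmul : s • ξ = |ξ| := funext hs
      have hpos : ∀ i, 0 < |ξ| i := pos_of_lt_of_apply_update_le hmono hface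
        ⟨abs_nonneg ξ, fun i => (hcube i).le⟩ hlt
      have hmem : s • ξ ∈ positiveCorner G a := hsmul ▸ ⟨fun i _ => ⟨hpos i, hcube i⟩, hlt⟩
      exact Or.inr (mem_iUnion_of_mem s hmem)

theorem isPreconnected_positiveCorner (hmono : MonotoneOn G (Icc 0 1)) :
    IsPreconnected (positiveCorner G a) := by
  have hbox : univ.pi (fun _ : ι => Ioo (0 : ℝ) 1) ⊆ Icc 0 1 := fun x hx =>
    ⟨fun i => (hx i trivial).1.le, fun i => (hx i trivial).2.le⟩
  have hord : (univ.pi fun _ : ι => Ioo (0 : ℝ) 1).OrdConnected :=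
    ordConnected_pi fun _ _ => ordConnected_Ioo
  have hsup : SupClosed (univ.pi fun _ : ι => Ioo (0 : ℝ) 1) :=
    supClosed_pi fun _ _ => LinearOrder.supClosed _
  refine isPreconnected_of_ordConnected_of_supClosed ⟨fun x hx y hy z hz => ?_⟩
    fun x hx y hy => ?_
  · have hzbox := hord.out hx.1 hy.1 hz
    exact ⟨hzbox, hx.2.trans_le (hmono (hbox hx.1) (hbox hzbox) hz.1)⟩
  · have hxy := hsup hx.1 hy.1
    exact ⟨hxy, hx.2.trans_le (hmono (hbox hx.1) (hbox hxy) le_sup_left)⟩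

theorem isConnected_innerRegion (habs : ∀ ξ, G |ξ| = G ξ) (hmono : MonotoneOn G (Icc 0 1))
    (h₀ : G 0 < a) : IsConnected (innerRegion G a) := by
  have hzero : (0 : ι → ℝ) ∈ innerRegion G a := ⟨fun _ => by simp, h₀⟩
  have hstar : StarConvex ℝ 0 (innerRegion G a) := by
    refine starConvex_zero_iff.mpr fun ξ ⟨hξ, hlt⟩ t ht₀ ht₁ => ?_
    have hle : |t • ξ| ≤ |ξ| := fun i => by
      simpa [abs_mul, abs_of_nonneg ht₀] using mul_le_of_le_one_left (abs_nonneg (ξ i)) ht₁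
    have hcube : ∀ i, |(t • ξ) i| < 1 := fun i => (hle i).trans_lt (hξ i)
    refine ⟨hcube, ?_⟩
    calc G (t • ξ) = G |t • ξ| := (habs _).symm
      _ ≤ G |ξ| := hmono ⟨abs_nonneg _, fun i => (hcube i).le⟩
          ⟨abs_nonneg _, fun i => (hξ i).le⟩ hle
      _ = G ξ := habs ξ
      _ < a := hlt
  exact (hstar.isPathConnected hzero).isConnected

variable [TopologicalSpace α] [OrderClosedTopology α]

theorem nonempty_positiveCorner (hG : Continuous G) (h₁ : a < G 1) :
    (positiveCorner G a).Nonempty := by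
  have hclosure : (1 : ι → ℝ) ∈ closure (univ.pi fun _ => Ioo (0 : ℝ) 1) := by
    rw [closure_pi_set, closure_Ioo zero_ne_one]
    exact fun _ _ => right_mem_Icc.mpr zero_le_one
  obtain ⟨x, hax, hx⟩ := mem_closure_iff.mp hclosure _ (isOpen_Ioi.preimage hG) h₁
  exact ⟨x, hx, hax⟩

theorem isConnected_corner (hG : Continuous G) (hmono : MonotoneOn G (Icc 0 1)) (h₁ : a < G 1)
    (s : ι → ℤˣ) : IsConnected (corner G a s) :=
  (Homeomorph.piCongrRight fun i => Homeomorph.smul (α := ℝ) (s i)).isConnected_preimage.mpr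
    ⟨nonempty_positiveCorner hG h₁, isPreconnected_positiveCorner hmono⟩

variable [Finite ι]

theorem isOpen_innerRegion (hG : Continuous G) : IsOpen (innerRegion G a) := by
  refine IsOpen.and ?_ (isOpen_Iio.preimage hG)
  simp only [ofPred_forall]
  exact isOpen_iInter_of_finite fun i => isOpen_lt (by fun_prop) continuous_const

theorem isOpen_corner (hG : Continuous G) (s : ι → ℤˣ) : IsOpen (corner G a s) :=
  ((isOpen_set_pi finite_univ fun _ _ => isOpen_Ioo).inter (isOpen_Ioi.preimage hG)).preimage
    (continuous_pi fun i => (continuous_apply i).const_smul (s i))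

theorem components_cube_minus_sphere_general [DecidableEq ι] (hG : Continuous G)
    (habs : ∀ ξ, G |ξ| = G ξ) (hmono : MonotoneOn G (Icc 0 1)) (h₀ : G 0 < a)
    (hface : ∀ i, G (update 1 i 0) ≤ a) (h₁ : a < G 1) :
    Nat.card (ConnectedComponents ↥{ξ : ι → ℝ | (∀ i, |ξ i| < 1) ∧ G ξ ≠ a}) =
      2 ^ Nat.card ι + 1 := by
  let V : Option (ι → ℤˣ) → Set (ι → ℝ) := fun o => o.elim (innerRegion G a) (corner G a)
  have hopen : ∀ o, IsOpen (V o) :=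
    Option.forall.mpr ⟨isOpen_innerRegion hG, isOpen_corner hG⟩
  have hdisj : Pairwise (Disjoint on V) := by
    rintro (_ | s) (_ | t) hst
    · exact absurd rfl hst
    · exact disjoint_innerRegion_corner habs t
    · exact (disjoint_innerRegion_corner habs s).symm
    · exact pairwise_disjoint_corner fun h => hst (congrArg some h)
  have hunion : ⋃ o, V o = {ξ : ι → ℝ | (∀ i, |ξ i| < 1) ∧ G ξ ≠ a} := by
    rw [iUnion_option]
    exact innerRegion_union_iUnion_corner habs hmono hface
  have hconn : ∀ o, IsConnected (V o) :=
    Option.forall.mpr ⟨isConnected_innerRegion habs hmono h₀, isConnected_corner hG hmono h₁⟩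
  rw [card_connectedComponents_of_isOpen_of_isConnected hopen hdisj hunion hconn,
    Finite.card_option, Nat.card_fun, Nat.card_eq_fintype_card (α := ℤˣ), Fintype.card_units_int]

end Regions

section PowerSum

variable {ι R : Type*} [Fintype ι]

theorem monotoneOn_sum_pow [Semiring R] [PartialOrder R] [IsOrderedRing R] (k : ℕ) :
    MonotoneOn (fun x : ι → R => ∑ i, x i ^ k) (Ici 0) :=
  fun _ hx _ _ hxy => Finset.sum_le_sum fun i _ => pow_le_pow_left₀ (hx i) (hxy i) k

theorem sum_update_one_zero_pow [DecidableEq ι] [Ring R] {k : ℕ} (hk : k ≠ 0) (i : ι) :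
    ∑ j, (update 1 i 0 : ι → R) j ^ k = Fintype.card ι - 1 := by
  have hcard : 1 ≤ Fintype.card ι := Fintype.card_pos_iff.mpr ⟨i⟩
  simp [update_apply, ite_pow, hk, Finset.sum_ite, Finset.filter_ne', Nat.cast_sub hcard]

end PowerSum

/-- For `n ≥ 1` and `n − 1 < a < n`, the complement in the open cube `(−1,1)ⁿ` of the
sphere `ξ₁² + ⋯ + ξₙ² = a` has exactly `2ⁿ + 1` connected components. -/
theorem components_cube_minus_sphere (n : ℕ) (hn : 1 ≤ n) (a : ℝ)
    (ha₁ : (n : ℝ) - 1 < a) (ha₂ : a < n) :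
    Nat.card (ConnectedComponents
      ↥{ξ : Fin n → ℝ | (∀ i, |ξ i| < 1) ∧ ∑ i, (ξ i) ^ 2 ≠ a}) = 2 ^ n + 1 := by
  have ha₀ : 0 < a := (sub_nonneg.mpr (by exact_mod_cast hn)).trans_lt ha₁
  have hface (i : Fin n) : ∑ j, (update 1 i 0 : Fin n → ℝ) j ^ 2 ≤ a := by
    simpa [sum_update_one_zero_pow two_ne_zero] using ha₁.le
  simpa using components_cube_minus_sphere_general (a := a)
    (G := fun x : Fin n → ℝ => ∑ i, x i ^ 2) (by fun_prop) (by simp)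
    ((monotoneOn_sum_pow 2).mono Icc_subset_Ici_self) (by simpa using ha₀) hface
    (by simpa using ha₂)
end

section
/- Let n ≥ 1 be an integer and let a be a real number with n − 1 < a < n. Then the open set {x ∈ ℝⁿ : 0 < xᵢ < π for all i, and cos²(x₁) + ⋯ + cos²(xₙ) ≠ a} has exactly 2ⁿ + 1 connected components. -/
open Real

/-!
Coordinatewise, `cos` maps `(0, π)ⁿ` homeomorphically onto the cube `(-1, 1)ⁿ` and turns the nodal
set into a sphere of squared radius `a`. As `n - 1 < a`, a point of the cube outside this sphere
has no vanishing coordinate, so it belongs to exactly one of the `2ⁿ` orthants. The part of the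
cube inside the sphere is convex, and the part outside the sphere in a given orthant becomes convex
once the squares of the coordinates are taken as new coordinates.
-/

open Function Set Topology

section ConnectedComponents

variable {X Y J : Type*} [TopologicalSpace X] [TopologicalSpace Y] {C : J → Set X}

theorem isClopen_of_pairwise_disjoint_of_iUnion_eq_univ (hopen : ∀ j, IsOpen (C j))
    (hdisj : Pairwise (Disjoint on C)) (hcover : ⋃ j, C j = univ) (j : J) : IsClopen (C j) := by
  have hcompl : (C j)ᶜ = ⋃ (k) (_ : k ≠ j), C k := by
    ext x
    obtain ⟨k, hk⟩ := iUnion_eq_univ_iff.1 hcover x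
    simp only [mem_compl_iff, mem_iUnion, exists_prop]
    refine ⟨fun hx => ⟨k, fun hkj => hx (hkj ▸ hk), hk⟩, ?_⟩
    rintro ⟨l, hlj, hl⟩ hx
    exact disjoint_left.1 (hdisj hlj) hl hx
  exact ⟨⟨hcompl ▸ isOpen_biUnion fun k _ => hopen k⟩, hopen j⟩

theorem card_connectedComponents_iUnion (hopen : ∀ j, IsOpen (C j))
    (hdisj : Pairwise (Disjoint on C)) (hconn : ∀ j, IsConnected (C j)) :
    Nat.card (ConnectedComponents ↥(⋃ j, C j)) = Nat.card J := by
  let D (j : J) : Set ↥(⋃ j, C j) := Subtype.val ⁻¹' C j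
  have hD_open (j : J) : IsOpen (D j) := (hopen j).preimage continuous_subtype_val
  have hD_disj : Pairwise (Disjoint on D) := fun j k hjk => (hdisj hjk).preimage Subtype.val
  have hD_cover : ⋃ j, D j = univ := by
    rw [← preimage_iUnion, Subtype.coe_preimage_self]
  have hD_conn (j : J) : IsConnected (D j) := by
    have himage : Subtype.val '' D j = C j := by
      rw [Subtype.image_preimage_coe, inter_eq_right.2 (subset_iUnion C j)]
    have hconn_image : IsConnected (Subtype.val '' D j) := himage ▸ hconn j
    exact ⟨hconn_image.nonempty.of_image,
      IsInducing.subtypeVal.isPreconnected_image.1 hconn_image.isPreconnected⟩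
  exact Nat.card_congr <| ConnectedComponents.equivOfIsClopenOfIsConnected
    (isClopen_of_pairwise_disjoint_of_iUnion_eq_univ hD_open hD_disj hD_cover)
    hD_disj hD_cover hD_conn

theorem card_connectedComponents_congr (e : X ≃ₜ Y) :
    Nat.card (ConnectedComponents X) = Nat.card (ConnectedComponents Y) := by
  have hfiber (y : Y) : IsConnected (e ⁻¹' {y}) := e.isConnected_preimage.2 isConnected_singleton
  exact Nat.card_congr
    (e.isQuotientMap.isCoinducing.connectedComponentsHomeomorph hfiber).toEquiv

end ConnectedComponents

section Orthant

variable {ι : Type*}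

/-- The open orthant of `ι → ℝ` in which the `i`-th coordinate has the sign `ε i`. -/
def orthant (ε : ι → ℤˣ) : Set (ι → ℝ) :=
  {y | ∀ i, 0 < ε i • y i}

theorem isOpen_orthant [Finite ι] (ε : ι → ℤˣ) : IsOpen (orthant ε) := by
  rw [orthant, ofPred_forall]
  exact isOpen_iInter_of_finite fun i => isOpen_lt (by fun_prop) (by fun_prop)

theorem pairwise_disjoint_orthant : Pairwise (Disjoint on (orthant : (ι → ℤˣ) → Set (ι → ℝ))) := by
  refine fun ε δ hεδ => disjoint_left.2 fun y hε hδ => ?_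
  obtain ⟨i, hi⟩ := ne_iff.1 hεδ
  have hpos := hε i
  rw [Int.units_ne_iff_eq_neg.1 hi, Units.neg_smul] at hpos
  linarith [hδ i]

theorem exists_mem_orthant {y : ι → ℝ} (hy : ∀ i, y i ≠ 0) : ∃ ε, y ∈ orthant ε := by
  have hsign (i : ι) : ∃ s : ℤˣ, 0 < s • y i := by
    rcases (hy i).lt_or_gt with hneg | hpos
    · exact ⟨-1, by simpa using hneg⟩
    · exact ⟨1, by simpa using hpos⟩
  exact ⟨fun i => (hsign i).choose, fun i => (hsign i).choose_spec⟩

end Orthant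

section Cube

/-- The open cube `(-1, 1)^ι`. -/
def openCube (ι : Type*) : Set (ι → ℝ) :=
  univ.pi fun _ => Ioo (-1) 1

theorem mem_openCube_iff_sq_lt_one {ι : Type*} {y : ι → ℝ} :
    y ∈ openCube ι ↔ ∀ i, y i ^ 2 < 1 := by
  simp only [openCube, mem_univ_pi, mem_Ioo, ← abs_lt, sq_lt_one_iff_abs_lt_one]

theorem isOpen_openCube (ι : Type*) [Finite ι] : IsOpen (openCube ι) :=
  isOpen_set_pi finite_univ fun _ _ => isOpen_Ioo

variable {ι : Type*} [Fintype ι] {a : ℝ}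

theorem ne_zero_of_mem_openCube_of_lt_sum_sq {y : ι → ℝ} (hy : y ∈ openCube ι)
    (hsum : (Fintype.card ι : ℝ) - 1 < ∑ i, y i ^ 2) (i : ι) : y i ≠ 0 := by
  classical
  have hle : ∑ j ∈ {i}ᶜ, y j ^ 2 ≤ Fintype.card ι - 1 := by
    calc ∑ j ∈ {i}ᶜ, y j ^ 2
        ≤ ∑ _j ∈ ({i}ᶜ : Finset ι), (1 : ℝ) :=
          Finset.sum_le_sum fun j _ => (mem_openCube_iff_sq_lt_one.1 hy j).le
      _ = Fintype.card ι - 1 := by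
          simp [Finset.card_compl, Nat.cast_sub (Fintype.card_pos_iff.2 ⟨i⟩)]
  rw [Fintype.sum_eq_add_sum_compl i] at hsum
  exact sq_pos_iff.1 (by linarith)

variable (ι a) in
/-- The part of the cube inside the sphere of squared radius `a`. -/
def centralRegion : Set (ι → ℝ) :=
  openCube ι ∩ {y | ∑ i, y i ^ 2 < a}

theorem isOpen_centralRegion : IsOpen (centralRegion ι a) :=
  (isOpen_openCube ι).inter (isOpen_lt (by fun_prop) (by fun_prop))

theorem convex_centralRegion : Convex ℝ (centralRegion ι a) := by
  have hcube : Convex ℝ (openCube ι) := convex_pi fun _ _ => convex_Ioo _ _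
  have hsq (i : ι) : ConvexOn ℝ univ fun y : ι → ℝ => y i ^ 2 :=
    (even_two.convexOn_pow (𝕜 := ℝ)).comp_linearMap (LinearMap.proj i : (ι → ℝ) →ₗ[ℝ] ℝ)
  have hsum : ConvexOn ℝ univ (∑ i, fun y : ι → ℝ => y i ^ 2) :=
    Finset.sum_induction _ (ConvexOn ℝ univ) (fun _ _ => ConvexOn.add)
      (convexOn_const 0 convex_univ) fun i _ => hsq i
  simpa [centralRegion] using hcube.inter (hsum.convex_lt a)

theorem isConnected_centralRegion (ha : 0 < a) : IsConnected (centralRegion ι a) := by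
  refine convex_centralRegion.isConnected ⟨0, ?_⟩
  simp [centralRegion, openCube, ha]

/-- The part of the cube in the orthant `ε` outside the sphere of squared radius `a`. -/
def cornerRegion (a : ℝ) (ε : ι → ℤˣ) : Set (ι → ℝ) :=
  openCube ι ∩ orthant ε ∩ {y | a < ∑ i, y i ^ 2}

theorem isOpen_cornerRegion (ε : ι → ℤˣ) : IsOpen (cornerRegion a ε) :=
  ((isOpen_openCube ι).inter (isOpen_orthant ε)).inter (isOpen_lt (by fun_prop) (by fun_prop))

theorem image_smul_sqrt_eq_cornerRegion (ε : ι → ℤˣ) :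
    (fun u i => ε i • √(u i)) '' ((univ.pi fun _ => Ioo 0 1) ∩ {u | a < ∑ i, u i}) =
      cornerRegion a ε := by
  ext y
  constructor
  · rintro ⟨u, ⟨hu, hsum⟩, rfl⟩
    have hsq (i : ι) : (ε i • √(u i)) ^ 2 = u i := by
      rw [smul_pow, Int.units_sq, one_smul, sq_sqrt (hu i trivial).1.le]
    refine ⟨⟨mem_openCube_iff_sq_lt_one.2 fun i => ?_, fun i => ?_⟩, ?_⟩
    · exact (hsq i).trans_lt (hu i trivial).2
    · rw [smul_smul, Int.units_mul_self, one_smul]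
      exact sqrt_pos.2 (hu i trivial).1
    · simpa only [mem_ofPred_eq, hsq] using hsum
  · rintro ⟨⟨hcube, horthant⟩, hsum⟩
    have hsqrt (i : ι) : √(y i ^ 2) = ε i • y i := by
      rw [← sqrt_sq (horthant i).le, smul_pow, Int.units_sq, one_smul]
    refine ⟨fun i => y i ^ 2, ⟨fun i _ => ⟨?_, mem_openCube_iff_sq_lt_one.1 hcube i⟩, hsum⟩, ?_⟩
    · exact sqrt_pos.1 ((hsqrt i).symm ▸ horthant i)
    · funext i
      simp only [hsqrt, smul_smul, Int.units_mul_self, one_smul]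

theorem isConnected_cornerRegion (ha : a < Fintype.card ι) (ε : ι → ℤˣ) :
    IsConnected (cornerRegion a ε) := by
  rw [← image_smul_sqrt_eq_cornerRegion]
  have hconvex : Convex ℝ ((univ.pi fun _ => Ioo 0 1) ∩ {u : ι → ℝ | a < ∑ i, u i}) :=
    (convex_pi fun _ _ => convex_Ioo _ _).inter
      (convex_halfSpace_gt (IsLinearMap.mk (by simp [Finset.sum_add_distrib])
        (by simp [Finset.mul_sum])) a)
  have hlim : Filter.Tendsto (fun t : ℝ => Fintype.card ι * t) (𝓝[<] 1) (𝓝 (Fintype.card ι)) :=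
    ((continuous_const_mul _).tendsto' 1 _ (mul_one _)).mono_left nhdsWithin_le_nhds
  obtain ⟨t, hat, ht⟩ :=
    ((hlim.eventually_const_lt ha).and (Ioo_mem_nhdsLT one_pos)).exists
  refine (hconvex.isConnected ⟨fun _ => t, fun _ _ => ht, by simpa using hat⟩).image _ ?_
  fun_prop

/-- The regions into which the sphere of squared radius `a` cuts the cube: the central one, and one
for each orthant. -/
def cubeRegion (a : ℝ) : Option (ι → ℤˣ) → Set (ι → ℝ)
  | none => centralRegion ι a
  | some ε => cornerRegion a ε

theorem pairwise_disjoint_cubeRegion :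
    Pairwise (Disjoint on (cubeRegion a : Option (ι → ℤˣ) → Set (ι → ℝ))) := by
  have hcentral (ε : ι → ℤˣ) : Disjoint (centralRegion ι a) (cornerRegion a ε) :=
    disjoint_left.2 fun _ hcentral hcorner => lt_asymm (mem_ofPred.1 hcentral.2) hcorner.2
  rintro (_ | ε) (_ | δ) hne
  · exact absurd rfl hne
  · exact hcentral δ
  · exact (hcentral ε).symm
  · refine (pairwise_disjoint_orthant fun h => hne (congrArg some h)).mono ?_ ?_
    · exact fun y hy => hy.1.2
    · exact fun y hy => hy.1.2

theorem iUnion_cubeRegion (ha : (Fintype.card ι : ℝ) - 1 < a) :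
    ⋃ j, cubeRegion a j = openCube ι ∩ {y | ∑ i, y i ^ 2 ≠ a} := by
  rw [iUnion_option]
  ext y
  constructor
  · rintro (hy | hy)
    · exact ⟨hy.1, hy.2.ne⟩
    · obtain ⟨ε, hε⟩ := mem_iUnion.1 hy
      exact ⟨hε.1.1, hε.2.ne'⟩
  · rintro ⟨hcube, hne⟩
    rcases hne.lt_or_gt with hlt | hgt
    · exact Or.inl ⟨hcube, hlt⟩
    · obtain ⟨ε, hε⟩ :=
        exists_mem_orthant (ne_zero_of_mem_openCube_of_lt_sum_sq hcube (ha.trans hgt))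
      exact Or.inr (mem_iUnion.2 ⟨ε, ⟨hcube, hε⟩, hgt⟩)

theorem card_connectedComponents_openCube_diff_sphere [Nonempty ι]
    (ha₁ : (Fintype.card ι : ℝ) - 1 < a) (ha₂ : a < Fintype.card ι) :
    Nat.card (ConnectedComponents ↥(openCube ι ∩ {y | ∑ i, y i ^ 2 ≠ a})) =
      2 ^ Fintype.card ι + 1 := by
  have hcard : (1 : ℝ) ≤ Fintype.card ι := by exact_mod_cast Fintype.card_pos
  have hopen : ∀ j : Option (ι → ℤˣ), IsOpen (cubeRegion a j)
    | none => isOpen_centralRegion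
    | some ε => isOpen_cornerRegion ε
  have hconn : ∀ j : Option (ι → ℤˣ), IsConnected (cubeRegion a j)
    | none => isConnected_centralRegion (by linarith)
    | some ε => isConnected_cornerRegion ha₂ ε
  rw [← iUnion_cubeRegion ha₁,
    card_connectedComponents_iUnion hopen pairwise_disjoint_cubeRegion hconn]
  simp [Finite.card_option, Nat.card_fun]

end Cube

/-- Coordinatewise cosine, as a homeomorphism between corresponding subsets of `(0, π)^ι` and of
`(-1, 1)^ι`. -/
noncomputable def cosHomeomorph {ι : Type*} [Fintype ι] (P : Set (ι → ℝ)) :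
    ↥{x : ι → ℝ | (∀ i, 0 < x i ∧ x i < π) ∧ (fun i => cos (x i)) ∈ P} ≃ₜ ↥(openCube ι ∩ P) :=
  let e := OpenPartialHomeomorph.pi fun _ : ι => cosPartialHomeomorph
  have hP : e.IsImage (e ⁻¹' P) P := fun _ _ => Iff.rfl
  have hsource : {x : ι → ℝ | (∀ i, 0 < x i ∧ x i < π) ∧ (fun i => cos (x i)) ∈ P} =
      e.source ∩ e ⁻¹' P :=
    Set.ext fun _ => and_congr_left' mem_univ_pi.symm
  e.homeomorphOfImageSubsetSource (hsource ▸ inter_subset_left) (hsource ▸ hP.image_eq)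

theorem components_hypercube_nodal_general {ι : Type*} [Fintype ι] [Nonempty ι] {a : ℝ}
    (ha₁ : (Fintype.card ι : ℝ) - 1 < a) (ha₂ : a < Fintype.card ι) :
    Nat.card (ConnectedComponents
      ↥{x : ι → ℝ | (∀ i, 0 < x i ∧ x i < π) ∧ ∑ i, cos (x i) ^ 2 ≠ a})
    = 2 ^ Fintype.card ι + 1 :=
  (card_connectedComponents_congr (cosHomeomorph {y | ∑ i, y i ^ 2 ≠ a})).trans
    (card_connectedComponents_openCube_diff_sphere ha₁ ha₂)

/-- For `n ≥ 1` and `n − 1 < a < n`, the complement in the open hypercube `(0,π)ⁿ` of the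
nodal set of `Ψ_a(x) = cos²x₁ + ⋯ + cos²xₙ − a` has exactly `2ⁿ + 1` connected
components. -/
theorem components_hypercube_nodal (n : ℕ) (hn : 1 ≤ n) (a : ℝ)
    (ha₁ : (n : ℝ) - 1 < a) (ha₂ : a < n) :
    Nat.card (ConnectedComponents
      ↥{x : Fin n → ℝ | (∀ i, 0 < x i ∧ x i < π) ∧ ∑ i, cos (x i) ^ 2 ≠ a})
    = 2 ^ n + 1 := by
  have : Nonempty (Fin n) := ⟨⟨0, hn⟩⟩
  simpa using components_hypercube_nodal_general (ι := Fin n) (a := a) (by simpa) (by simpa)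
end

section
/- Let 0 < c < a < 4π. The set Ω := {(x,y) ∈ ℝ² : 0 < x < 4π, 0 < y < 2π, x ≠ c} \ ((0,a] × {π}) has exactly 3 connected components. -/
open Real

/-!
The line `x = c` splits the cracked rectangle into three disjoint open pieces. To its left the crack
has full width and separates the two open rectangles below and above it. To its right the crack
misses at least one full column and one full row. Every point off the crack lies on a full column or
a full row that misses it as well, and each such column crosses each such row, so this piece is
connected.
-/

open Set

theorem isClopen_of_isOpen_of_iUnion_eq_univ {X ι : Type*} [TopologicalSpace X] {U : ι → Set X}
    (hopen : ∀ i, IsOpen (U i)) (hdisj : Pairwise (Function.onFun Disjoint U))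
    (huniv : ⋃ i, U i = univ) (i : ι) : IsClopen (U i) := by
  refine isClopen_of_disjoint_cover_open (b := ⋃ j ≠ i, U j) (fun x _ ↦ ?_) (hopen i)
    (isOpen_biUnion fun j _ ↦ hopen j) (disjoint_iUnion₂_right.mpr fun j hj ↦ hdisj hj.symm)
  obtain ⟨j, hj⟩ := iUnion_eq_univ_iff.mp huniv x
  obtain rfl | hji := eq_or_ne j i
  · exact .inl hj
  · exact .inr (mem_biUnion hji hj)

theorem card_connectedComponents_iUnion_s16 {X ι : Type*} [TopologicalSpace X] {V : ι → Set X}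
    (hopen : ∀ i, IsOpen (V i)) (hdisj : Pairwise (Function.onFun Disjoint V))
    (hconn : ∀ i, IsConnected (V i)) :
    Nat.card (ConnectedComponents (⋃ i, V i)) = Nat.card ι := by
  let U (i : ι) : Set (⋃ i, V i) := Subtype.val ⁻¹' V i
  have hUdisj : Pairwise (Function.onFun Disjoint U) := fun _ _ hij ↦ (hdisj hij).preimage _
  have hUuniv : ⋃ i, U i = univ := by
    rw [← preimage_iUnion, Subtype.coe_preimage_self]
  have hUclopen : ∀ i, IsClopen (U i) :=
    isClopen_of_isOpen_of_iUnion_eq_univ (fun i ↦ (hopen i).preimage continuous_subtype_val)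
      hUdisj hUuniv
  have hUconn (i : ι) : IsConnected (U i) :=
    (hconn i).preimage_of_isOpenMap Subtype.val_injective
      (isOpen_iUnion hopen).isOpenMap_subtype_val
      (Subtype.range_coe.symm ▸ subset_iUnion V i)
  exact Nat.card_congr
    (ConnectedComponents.equivOfIsClopenOfIsConnected hUclopen hUdisj hUuniv hUconn)

section Product

variable {X Y : Type*} [TopologicalSpace X] [TopologicalSpace Y] {s A : Set X} {t B : Set Y}

theorem isPreconnected_prod_singleton_union_singleton_prod (hs : IsPreconnected s)
    (ht : IsPreconnected t) {x : X} {y : Y} (hx : x ∈ s) (hy : y ∈ t) :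
    IsPreconnected (s ×ˢ {y} ∪ {x} ×ˢ t) :=
  .union (x, y) ⟨hx, rfl⟩ ⟨rfl, hy⟩ (hs.prod isPreconnected_singleton)
    (isPreconnected_singleton.prod ht)

theorem isConnected_prod_sdiff_prod (hs : IsPreconnected s) (ht : IsPreconnected t)
    (hsA : (s \ A).Nonempty) (htB : (t \ B).Nonempty) : IsConnected (s ×ˢ t \ A ×ˢ B) := by
  obtain ⟨x₀, hx₀, hx₀A⟩ := hsA
  obtain ⟨y₀, hy₀, hy₀B⟩ := htB
  have cross_subset {x : X} {y : Y} (hx : x ∈ s \ A) (hy : y ∈ t \ B) :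
      s ×ˢ {y} ∪ {x} ×ˢ t ⊆ s ×ˢ t \ A ×ˢ B := by
    rintro ⟨x', y'⟩ (⟨hx', rfl⟩ | ⟨rfl, hy'⟩)
    · exact ⟨⟨hx', hy.1⟩, fun h ↦ hy.2 h.2⟩
    · exact ⟨⟨hx.1, hy'⟩, fun h ↦ hx.2 h.1⟩
  refine ⟨⟨(x₀, y₀), ⟨hx₀, hy₀⟩, fun h ↦ hx₀A h.1⟩, isPreconnected_of_forall (x₀, y₀) ?_⟩
  rintro ⟨x, y⟩ ⟨⟨hx, hy⟩, hxy⟩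
  by_cases hxA : x ∈ A
  · have hyB : y ∉ B := fun hyB ↦ hxy ⟨hxA, hyB⟩
    exact ⟨_, cross_subset ⟨hx₀, hx₀A⟩ ⟨hy, hyB⟩, .inr ⟨rfl, hy₀⟩, .inl ⟨hx, rfl⟩,
      isPreconnected_prod_singleton_union_singleton_prod hs ht hx₀ hy⟩
  · exact ⟨_, cross_subset ⟨hx, hxA⟩ ⟨hy₀, hy₀B⟩, .inl ⟨hx₀, rfl⟩, .inr ⟨rfl, hy⟩,
      isPreconnected_prod_singleton_union_singleton_prod hs ht hx hy₀⟩

end Product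

theorem Ioo_disjoint_Ioo_same {α : Type*} [Preorder α] {a b c : α} :
    Disjoint (Ioo a b) (Ioo b c) :=
  Ioc_disjoint_Ioi_same.mono Ioo_subset_Ioc_self Ioo_subset_Ioi_self

/-- The three regions into which the line `{x = c}` divides the rectangle `(l, r) × (d, u)` with the
crack `(l, a] × {m}`: below and above the crack on the left of the line, and the remaining cracked
rectangle on its right. There the crack is encoded as the half-line `(-∞, a] × {m}`, which agrees
with it because `l ≤ c`. -/
def crackedRectanglePiece {α β : Type*} [Preorder α] [Preorder β] (l c a r : α) (d m u : β) :
    Fin 3 → Set (α × β) :=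
  ![Ioo l c ×ˢ Ioo d m, Ioo l c ×ˢ Ioo m u, Ioo c r ×ˢ Ioo d u \ Iic a ×ˢ {m}]

namespace crackedRectanglePiece

variable {α β : Type*}

theorem iUnion_eq [LinearOrder α] [LinearOrder β] {l c a r : α} {d m u : β}
    (hlc : l ≤ c) (hca : c ≤ a) (har : a ≤ r) (hdm : d ≤ m) (hmu : m ≤ u) :
    ⋃ i, crackedRectanglePiece l c a r d m u i =
      {p : α × β | l < p.1 ∧ p.1 < r ∧ d < p.2 ∧ p.2 < u ∧ p.1 ≠ c} \ (Ioc l a ×ˢ {m}) := by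
  ext ⟨x, y⟩
  have mem_pieces : (x, y) ∈ ⋃ i, crackedRectanglePiece l c a r d m u i ↔
      (x ∈ Ioo l c ∧ y ∈ Ioo d m) ∨ (x ∈ Ioo l c ∧ y ∈ Ioo m u) ∨
        (x ∈ Ioo c r ∧ y ∈ Ioo d u) ∧ ¬(x ∈ Iic a ∧ y = m) := by
    rw [mem_iUnion, Fin.exists_fin_succ, Fin.exists_fin_two]
    rfl
  rw [mem_pieces]
  simp only [mem_sdiff, mem_ofPred_eq, mem_prod, mem_Ioc, mem_Ioo, mem_Iic, mem_singleton_iff]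
  constructor
  · grind
  · rintro ⟨⟨hlx, hxr, hdy, hyu, hxc⟩, hcrack⟩
    obtain hxc | hcx := lt_or_gt_of_ne hxc
    · have hym : y ≠ m := fun hym ↦ hcrack ⟨⟨hlx, hxc.le.trans hca⟩, hym⟩
      obtain hym | hmy := lt_or_gt_of_ne hym
      · exact .inl ⟨⟨hlx, hxc⟩, hdy, hym⟩
      · exact .inr (.inl ⟨⟨hlx, hxc⟩, hmy, hyu⟩)
    · exact .inr (.inr ⟨⟨⟨hcx, hxr⟩, hdy, hyu⟩, fun h ↦ hcrack ⟨⟨hlx, h.1⟩, h.2⟩⟩)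

theorem pairwise_disjoint [Preorder α] [Preorder β] (l c a r : α) (d m u : β) :
    Pairwise (Function.onFun Disjoint (crackedRectanglePiece l c a r d m u)) := by
  have left_right (t t' : Set β) : Disjoint (Ioo l c ×ˢ t) (Ioo c r ×ˢ t' \ Iic a ×ˢ {m}) :=
    (disjoint_prod.mpr (.inl Ioo_disjoint_Ioo_same)).mono_right sdiff_subset
  have below_above : Disjoint (Ioo l c ×ˢ Ioo d m) (Ioo l c ×ˢ Ioo m u) :=
    disjoint_prod.mpr (.inr Ioo_disjoint_Ioo_same)
  rw [pairwise_disjoint_on]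
  intro i j hij
  fin_cases i <;> fin_cases j <;> first
    | exact absurd hij (by decide)
    | exact below_above
    | exact left_right _ _

theorem isOpen [LinearOrder α] [TopologicalSpace α] [OrderClosedTopology α]
    [LinearOrder β] [TopologicalSpace β] [OrderClosedTopology β]
    (l c a r : α) (d m u : β) (i : Fin 3) : IsOpen (crackedRectanglePiece l c a r d m u i) := by
  fin_cases i
  · exact isOpen_Ioo.prod isOpen_Ioo
  · exact isOpen_Ioo.prod isOpen_Ioo
  · exact (isOpen_Ioo.prod isOpen_Ioo).sdiff (isClosed_Iic.prod isClosed_singleton)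

variable [ConditionallyCompleteLinearOrder α] [DenselyOrdered α] [TopologicalSpace α]
  [OrderTopology α] [ConditionallyCompleteLinearOrder β] [DenselyOrdered β] [TopologicalSpace β]
  [OrderTopology β] {l c a r : α} {d m u : β}

theorem isConnected (hlc : l < c) (hca : c ≤ a) (har : a < r) (hdm : d < m) (hmu : m < u)
    (i : Fin 3) : IsConnected (crackedRectanglePiece l c a r d m u i) := by
  fin_cases i
  · exact (isConnected_Ioo hlc).prod (isConnected_Ioo hdm)
  · exact (isConnected_Ioo hlc).prod (isConnected_Ioo hmu)
  · obtain ⟨x, hax, hxr⟩ := exists_between har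
    obtain ⟨y, hdy, hym⟩ := exists_between hdm
    exact isConnected_prod_sdiff_prod isPreconnected_Ioo isPreconnected_Ioo
      ⟨x, ⟨hca.trans_lt hax, hxr⟩, hax.not_ge⟩ ⟨y, ⟨hdy, hym.trans hmu⟩, hym.ne⟩

end crackedRectanglePiece

theorem three_components_cracked_rectangle_general {α β : Type*}
    [ConditionallyCompleteLinearOrder α] [DenselyOrdered α] [TopologicalSpace α] [OrderTopology α]
    [ConditionallyCompleteLinearOrder β] [DenselyOrdered β] [TopologicalSpace β] [OrderTopology β]
    {l c a r : α} {d m u : β} (hlc : l < c) (hca : c ≤ a) (har : a < r) (hdm : d < m)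
    (hmu : m < u) :
    Nat.card (ConnectedComponents
      ↥({p : α × β | l < p.1 ∧ p.1 < r ∧ d < p.2 ∧ p.2 < u ∧ p.1 ≠ c} \ (Ioc l a ×ˢ {m}))) =
        3 := by
  rw [← crackedRectanglePiece.iUnion_eq hlc.le hca har.le hdm.le hmu.le,
    card_connectedComponents_iUnion_s16 (crackedRectanglePiece.isOpen l c a r d m u)
      (crackedRectanglePiece.pairwise_disjoint l c a r d m u)
      (crackedRectanglePiece.isConnected hlc hca har hdm hmu),
    Nat.card_fin]

/-- The rectangle `(0,4π) × (0,2π)` with the horizontal crack `(0,a] × {π}` removed, and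
further cut along the vertical line `{x = c}` (the nodal line of a suitable linear
combination of the first two eigenfunctions of the cracked rectangle), has exactly
`3` connected components. -/
theorem three_components_cracked_rectangle (a c : ℝ) (hc : 0 < c) (hca : c < a)
    (ha : a < 4 * π) :
    Nat.card (ConnectedComponents
      ↥({p : ℝ × ℝ | 0 < p.1 ∧ p.1 < 4 * π ∧ 0 < p.2 ∧ p.2 < 2 * π ∧ p.1 ≠ c}
        \ (Set.Ioc 0 a ×ˢ {π}))) = 3 :=
  three_components_cracked_rectangle_general hc hca.le ha pi_pos (by linarith [pi_pos])
end

section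
/- Let 0 < a ≤ 1 and let b be a real number with 1 − a < b < 1. Let S² := {(x,y,z) ∈ ℝ³ : x² + y² + z² = 1}, and let K_a := {(x,y,z) ∈ S² : (x = 0 or y = 0) and z ≥ 1 − a} be the cross-shaped crack through the north pole. Then the set {(x,y,z) ∈ S² : (x,y,z) ∉ K_a and z ≠ b} has exactly 5 connected components. -/
/-- The unit sphere in `ℝ³`. -/
def unitSphere2 : Set (ℝ × ℝ × ℝ) :=
  {p | p.1 ^ 2 + p.2.1 ^ 2 + p.2.2 ^ 2 = 1}

/-- The cross-shaped crack through the north pole: the points of the sphere lying on the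
planes `x = 0` or `y = 0` with `z ≥ 1 − a`. -/
def crossCrack (a : ℝ) : Set (ℝ × ℝ × ℝ) :=
  {p ∈ unitSphere2 | (p.1 = 0 ∨ p.2.1 = 0) ∧ 1 - a ≤ p.2.2}

/-!
Off the level `z = b`, the cracked sphere is cut by open conditions into the part `z < b` and the
four parts of the cap `z > b` over the open quadrants, since the arms of the crack reach below the
level. Each of the five is connected. The map `(w, t) ↦ (√(1 - t ^ 2) w, t)` from the cylinder
`S¹ × [-1, 1]` onto the sphere exhibits a part of the cap as the image of an arc times an interval.
Below the level, the meridian from a point to the south pole avoids the crack: an arm of the crack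
is an arc of meridian ending at the north pole, and it does not reach the south pole.
-/

open Metric Set

theorem coe_connectedComponents_eq_of_isPreconnected {E : Type*} [TopologicalSpace E]
    {X S : Set E} (hS : IsPreconnected S) (hSX : S ⊆ X) {p q : X}
    (hp : (p : E) ∈ S) (hq : (q : E) ∈ S) : (p : ConnectedComponents X) = q := by
  have h : IsPreconnected ((↑) ⁻¹' S : Set X) := by
    rwa [← Topology.IsInducing.subtypeVal.isPreconnected_image, Subtype.image_preimage_coe,
      inter_eq_right.mpr hSX]
  exact ConnectedComponents.coe_eq_coe'.mpr (h.subset_connectedComponent hq hp)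

theorem card_connectedComponents_of_isConnected_inter {E ι : Type*} [TopologicalSpace E]
    {X : Set E} {V : ι → Set E} (hopen : ∀ i, IsOpen (V i)) (hV : ∀ x ∈ X, ∃! i, x ∈ V i)
    (hconn : ∀ i, IsConnected (X ∩ V i)) : Nat.card (ConnectedComponents X) = Nat.card ι := by
  choose label hlabel hunique using fun x : X ↦ hV x x.2
  have mem_iff (x : X) (i : ι) : (x : E) ∈ V i ↔ label x = i :=
    ⟨fun h ↦ (hunique x i h).symm, fun h ↦ h ▸ hlabel x⟩
  let _ : TopologicalSpace ι := ⊥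
  have : DiscreteTopology ι := ⟨rfl⟩
  have hcont : Continuous label := by
    refine (IsLocallyConstant.iff_isOpen_fiber.mpr fun i ↦ ?_).continuous
    convert (hopen i).preimage (continuous_subtype_val (p := (· ∈ X))) using 1
    ext x
    exact (mem_iff x i).symm
  refine Nat.card_eq_of_bijective hcont.connectedComponentsLift ⟨?_, fun i ↦ ?_⟩
  · refine ConnectedComponents.surjective_coe.forall₂.mpr fun p q hpq ↦ ?_
    have hq : (q : E) ∈ V (label p) := (mem_iff q _).mpr (by simpa using hpq.symm)
    exact coe_connectedComponents_eq_of_isPreconnected (hconn (label p)).isPreconnected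
      inter_subset_left ⟨p.2, hlabel p⟩ ⟨q.2, hq⟩
  · obtain ⟨x, hxX, hxi⟩ := (hconn i).nonempty
    exact ⟨(⟨x, hxX⟩ : X), by simpa using (mem_iff ⟨x, hxX⟩ i).mp hxi⟩

theorem isConnected_inter_sphere_of_smul_mem {E : Type*} [NormedAddCommGroup E]
    [NormedSpace ℝ E] {C : Set E} (hC : IsConnected C) (hzero : 0 ∉ C)
    (hsmul : ∀ c : ℝ, 0 < c → ∀ x ∈ C, c • x ∈ C) : IsConnected (C ∩ sphere 0 1) := by
  have hne (x : E) (hx : x ∈ C) : x ≠ 0 := ne_of_mem_of_not_mem hx hzero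
  have himage : (fun x ↦ ‖x‖⁻¹ • x) '' C = C ∩ sphere 0 1 := by
    ext y
    constructor
    · rintro ⟨x, hx, rfl⟩
      exact ⟨hsmul _ (inv_pos.mpr (norm_pos_iff.mpr (hne x hx))) x hx,
        by simp [norm_smul, hne x hx]⟩
    · rintro ⟨hyC, hy⟩
      exact ⟨y, hyC, by simp [mem_sphere_zero_iff_norm.mp hy]⟩
  rw [← himage]
  exact hC.image _ ((continuousOn_id.norm.inv₀ fun x hx ↦ norm_ne_zero_iff.mpr (hne x hx)).smul
    continuousOn_id)

theorem existsUnique_units_mul_pos {x : ℝ} (hx : x ≠ 0) : ∃! s : ℤˣ, 0 < (s : ℝ) * x := by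
  rcases hx.lt_or_gt with hx | hx
  · refine ⟨-1, by simpa using hx, fun s hs ↦ ?_⟩
    rcases Int.units_eq_one_or s with rfl | rfl
    · simp [hx.not_gt] at hs
    · rfl
  · refine ⟨1, by simpa using hx, fun s hs ↦ ?_⟩
    rcases Int.units_eq_one_or s with rfl | rfl
    · rfl
    · simp [hx.not_gt] at hs

/-- The open quadrant of the plane in which the coordinates have the signs `s` and `t`. The
horizontal coordinates of a point of `ℝ³` are read as a complex number, so that the unit circle is
`Metric.sphere (0 : ℂ) 1`. -/
def openQuadrant (s t : ℤˣ) : Set ℂ :=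
  {w | 0 < (s : ℝ) * w.re ∧ 0 < (t : ℝ) * w.im}

namespace openQuadrant

variable (s t : ℤˣ)

theorem zero_notMem : 0 ∉ openQuadrant s t := by
  simp [openQuadrant]

theorem smul_mem (c : ℝ) (hc : 0 < c) (w : ℂ) (hw : w ∈ openQuadrant s t) :
    c • w ∈ openQuadrant s t := by
  simpa [openQuadrant, mul_left_comm _ c, hc] using hw

theorem isOpen : IsOpen (openQuadrant s t) :=
  have hre : IsOpen {w : ℂ | 0 < (s : ℝ) * w.re} := isOpen_lt (by fun_prop) (by fun_prop)
  have him : IsOpen {w : ℂ | 0 < (t : ℝ) * w.im} := isOpen_lt (by fun_prop) (by fun_prop)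
  hre.inter him

theorem isConnected : IsConnected (openQuadrant s t) := by
  have hconvex : Convex ℝ (openQuadrant s t) :=
    ((convex_Ioi 0).linear_preimage ((s : ℝ) • Complex.reLm)).inter
      ((convex_Ioi 0).linear_preimage ((t : ℝ) • Complex.imLm))
  refine hconvex.isConnected ⟨⟨s, t⟩, ?_⟩
  rcases Int.units_eq_one_or s with rfl | rfl <;> rcases Int.units_eq_one_or t with rfl | rfl <;>
    simp [openQuadrant]

end openQuadrant

theorem sqrt_one_sub_sq_pos {t : ℝ} (ht : t ∈ Ioo (-1) 1) : 0 < √(1 - t ^ 2) :=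
  Real.sqrt_pos.mpr (by nlinarith [ht.1, ht.2])

/-- The horizontal projection of the cylinder `S¹ × [-1, 1]` onto the unit sphere: `(w, t)` goes to
the point of height `t` on the meridian through `w`. The formula is given on all of `ℂ × ℝ`, and is
meaningful where `‖w‖ = 1` and `|t| ≤ 1`. -/
noncomputable def cylinderToSphere (q : ℂ × ℝ) : ℝ × ℝ × ℝ :=
  (√(1 - q.2 ^ 2) * q.1.re, √(1 - q.2 ^ 2) * q.1.im, q.2)

namespace cylinderToSphere

theorem continuous : Continuous cylinderToSphere := by
  unfold cylinderToSphere
  fun_prop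

theorem mem_unitSphere2 {w : ℂ} {t : ℝ} (hw : ‖w‖ = 1) (ht : t ∈ Icc (-1) 1) :
    cylinderToSphere (w, t) ∈ unitSphere2 := by
  have hcircle : w.re ^ 2 + w.im ^ 2 = 1 := by
    simpa [Complex.norm_eq_sqrt_sq_add_sq, Real.sqrt_eq_one] using hw
  have hnonneg : 0 ≤ 1 - t ^ 2 := by nlinarith [ht.1, ht.2]
  simp only [cylinderToSphere, unitSphere2, mem_ofPred_eq, mul_pow, Real.sq_sqrt hnonneg]
  linear_combination (1 - t ^ 2) * hcircle

theorem neg_one (w : ℂ) : cylinderToSphere (w, -1) = (0, 0, -1) := by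
  simp [cylinderToSphere]

theorem mem_crossCrack_iff {a t : ℝ} {w : ℂ} (hw : ‖w‖ = 1) (ht : t ∈ Ioo (-1) 1) :
    cylinderToSphere (w, t) ∈ crossCrack a ↔ (w.re = 0 ∨ w.im = 0) ∧ 1 - a ≤ t := by
  have hsphere := mem_unitSphere2 hw (Ioo_subset_Icc_self ht)
  simp only [crossCrack, mem_ofPred_eq, hsphere, true_and]
  simp [cylinderToSphere, (sqrt_one_sub_sq_pos ht).ne']

theorem exists_eq {p : ℝ × ℝ × ℝ} (hp : p ∈ unitSphere2) :
    ∃ w : ℂ, ‖w‖ = 1 ∧ cylinderToSphere (w, p.2.2) = p := by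
  obtain ⟨x, y, z⟩ := p
  have hradius : √(1 - z ^ 2) = ‖(⟨x, y⟩ : ℂ)‖ := by
    rw [Complex.norm_eq_sqrt_sq_add_sq]
    congr 1
    exact (eq_sub_of_add_eq hp).symm
  by_cases hw : (⟨x, y⟩ : ℂ) = 0
  · obtain ⟨rfl, rfl⟩ : x = 0 ∧ y = 0 := by simpa [Complex.ext_iff] using hw
    exact ⟨1, by simp, by simp [cylinderToSphere, hradius, hw]⟩
  · have hnorm := norm_ne_zero_iff.mpr hw
    refine ⟨‖(⟨x, y⟩ : ℂ)‖⁻¹ • ⟨x, y⟩, by simp [hnorm], ?_⟩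
    simp [cylinderToSphere, hradius, hnorm]

end cylinderToSphere

theorem mem_Icc_of_mem_unitSphere2 {p : ℝ × ℝ × ℝ} (hp : p ∈ unitSphere2) :
    p.2.2 ∈ Icc (-1) 1 := by
  have h : p.1 ^ 2 + p.2.1 ^ 2 + p.2.2 ^ 2 = 1 := hp
  exact abs_le.mp (abs_le_one_iff_mul_self_le_one.mpr (by nlinarith))

theorem isConnected_unitSphere2_sector {C : Set ℂ} (hC : IsConnected C) (hzero : 0 ∉ C)
    (hsmul : ∀ c : ℝ, 0 < c → ∀ w ∈ C, c • w ∈ C) {I : Set ℝ} (hI : IsConnected I)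
    (hIsub : I ⊆ Ioo (-1) 1) :
    IsConnected {p : ℝ × ℝ × ℝ | p ∈ unitSphere2 ∧ ⟨p.1, p.2.1⟩ ∈ C ∧ p.2.2 ∈ I} := by
  have hhoriz (w : ℂ) (t : ℝ) : (⟨(cylinderToSphere (w, t)).1, (cylinderToSphere (w, t)).2.1⟩ : ℂ)
      = √(1 - t ^ 2) • w := by
    simp [cylinderToSphere, Complex.ext_iff]
  have himage : cylinderToSphere '' ((C ∩ sphere 0 1) ×ˢ I) =
      {p : ℝ × ℝ × ℝ | p ∈ unitSphere2 ∧ ⟨p.1, p.2.1⟩ ∈ C ∧ p.2.2 ∈ I} := by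
    ext p
    constructor
    · rintro ⟨⟨w, t⟩, ⟨⟨hwC, hw⟩, ht⟩, rfl⟩
      refine ⟨cylinderToSphere.mem_unitSphere2 (mem_sphere_zero_iff_norm.mp hw)
        (Ioo_subset_Icc_self (hIsub ht)), ?_, ht⟩
      rw [hhoriz]
      exact hsmul _ (sqrt_one_sub_sq_pos (hIsub ht)) w hwC
    · rintro ⟨hp, hpC, hpI⟩
      obtain ⟨w, hw, hwp⟩ := cylinderToSphere.exists_eq hp
      have hpos := sqrt_one_sub_sq_pos (hIsub hpI)
      refine ⟨(w, p.2.2), ⟨⟨?_, mem_sphere_zero_iff_norm.mpr hw⟩, hpI⟩, hwp⟩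
      rw [← hwp, hhoriz] at hpC
      simpa [smul_smul, hpos.ne'] using hsmul _ (inv_pos.mpr hpos) _ hpC
  rw [← himage]
  exact ((isConnected_inter_sphere_of_smul_mem hC hzero hsmul).prod hI).image _
    cylinderToSphere.continuous.continuousOn

section CrackedSphere

variable {a b : ℝ}

theorem southPole_notMem_crossCrack (ha : a < 2) : ((0, 0, -1) : ℝ × ℝ × ℝ) ∉ crossCrack a := by
  rintro ⟨-, -, h⟩
  linarith [show 1 - a ≤ -1 from h]

theorem cylinderToSphere_notMem_crossCrack_of_le (ha : a < 2) {w : ℂ} (hw : ‖w‖ = 1) {t z : ℝ}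
    (ht : -1 ≤ t) (htz : t ≤ z) (hz : z < 1) (h : cylinderToSphere (w, z) ∉ crossCrack a) :
    cylinderToSphere (w, t) ∉ crossCrack a := by
  rcases ht.eq_or_lt with rfl | ht
  · rw [cylinderToSphere.neg_one]
    exact southPole_notMem_crossCrack ha
  · rw [cylinderToSphere.mem_crossCrack_iff hw ⟨ht.trans_le htz, hz⟩] at h
    rw [cylinderToSphere.mem_crossCrack_iff hw ⟨ht, htz.trans_lt hz⟩]
    exact fun ⟨haxis, hat⟩ ↦ h ⟨haxis, hat.trans htz⟩

theorem isConnected_crackedSphere_below (ha : a < 2) (hb : b ∈ Ioc (-1) 1) :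
    IsConnected {p : ℝ × ℝ × ℝ | p ∈ unitSphere2 ∧ p ∉ crossCrack a ∧ p.2.2 < b} := by
  refine ⟨⟨(0, 0, -1), by simp [unitSphere2], southPole_notMem_crossCrack ha, hb.1⟩,
    isPreconnected_of_forall (0, 0, -1) ?_⟩
  rintro p ⟨hsphere, hcrack, hpb⟩
  obtain ⟨w, hw, hwp⟩ := cylinderToSphere.exists_eq hsphere
  have hz : -1 ≤ p.2.2 := (mem_Icc_of_mem_unitSphere2 hsphere).1
  have hz' : p.2.2 < 1 := hpb.trans_le hb.2
  refine ⟨(fun t ↦ cylinderToSphere (w, t)) '' Icc (-1) p.2.2, ?_,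
    ⟨-1, left_mem_Icc.mpr hz, cylinderToSphere.neg_one w⟩, ⟨p.2.2, right_mem_Icc.mpr hz, hwp⟩,
    isPreconnected_Icc.image _
      (cylinderToSphere.continuous.comp (Continuous.prodMk_right w)).continuousOn⟩
  rintro _ ⟨t, ⟨ht, htz⟩, rfl⟩
  exact ⟨cylinderToSphere.mem_unitSphere2 hw ⟨ht, htz.trans hz'.le⟩,
    cylinderToSphere_notMem_crossCrack_of_le ha hw ht htz hz' (hwp.symm ▸ hcrack),
    htz.trans_lt hpb⟩

/-- The five open regions of `ℝ³` that cut out the components: `none` is the part below the level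
`z = b`, and `some (s, t)` is the part above it over the quadrant with signs `s` and `t`. -/
def levelRegion (b : ℝ) : Option (ℤˣ × ℤˣ) → Set (ℝ × ℝ × ℝ)
  | none => {p | p.2.2 < b}
  | some (s, t) => {p | b < p.2.2 ∧ ⟨p.1, p.2.1⟩ ∈ openQuadrant s t}

namespace levelRegion

theorem isOpen (i : Option (ℤˣ × ℤˣ)) : IsOpen (levelRegion b i) := by
  rcases i with _ | ⟨s, t⟩
  · exact isOpen_lt (by fun_prop) continuous_const
  · have hhoriz : Continuous fun p : ℝ × ℝ × ℝ ↦ (⟨p.1, p.2.1⟩ : ℂ) :=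
      Complex.equivRealProdCLM.symm.continuous.comp (continuous_fst.prodMk continuous_snd.fst)
    have habove : IsOpen {p : ℝ × ℝ × ℝ | b < p.2.2} := isOpen_lt continuous_const (by fun_prop)
    exact habove.inter ((openQuadrant.isOpen s t).preimage hhoriz)

theorem existsUnique_mem {p : ℝ × ℝ × ℝ} (hpb : p.2.2 ≠ b)
    (hp : b < p.2.2 → p.1 ≠ 0 ∧ p.2.1 ≠ 0) : ∃! i, p ∈ levelRegion b i := by
  rcases hpb.lt_or_gt with hlt | hgt
  · refine ⟨none, hlt, ?_⟩
    rintro (_ | ⟨s, t⟩) hi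
    · rfl
    · exact absurd hi.1 hlt.not_gt
  · obtain ⟨hx, hy⟩ := hp hgt
    obtain ⟨s, hs, hs_unique⟩ := existsUnique_units_mul_pos hx
    obtain ⟨t, ht, ht_unique⟩ := existsUnique_units_mul_pos hy
    refine ⟨some (s, t), ⟨hgt, hs, ht⟩, ?_⟩
    rintro (_ | ⟨s', t'⟩) hi
    · exact absurd hi hgt.not_gt
    · rw [hs_unique s' hi.2.1, ht_unique t' hi.2.2]

end levelRegion

/-- The sphere cracked along `crossCrack a`, with the level `z = b` removed. -/
def crackedSphereOffLevel (a b : ℝ) : Set (ℝ × ℝ × ℝ) :=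
  {p | p ∈ unitSphere2 ∧ p ∉ crossCrack a ∧ p.2.2 ≠ b}

namespace crackedSphereOffLevel

theorem existsUnique_mem_levelRegion (hab : 1 - a ≤ b) {p : ℝ × ℝ × ℝ}
    (hp : p ∈ crackedSphereOffLevel a b) : ∃! i, p ∈ levelRegion b i := by
  obtain ⟨hsphere, hcrack, hpb⟩ := hp
  refine levelRegion.existsUnique_mem hpb fun hgt ↦ ⟨fun hx ↦ ?_, fun hy ↦ ?_⟩
  · exact hcrack ⟨hsphere, .inl hx, hab.trans hgt.le⟩
  · exact hcrack ⟨hsphere, .inr hy, hab.trans hgt.le⟩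

theorem inter_levelRegion_none : crackedSphereOffLevel a b ∩ levelRegion b none =
    {p | p ∈ unitSphere2 ∧ p ∉ crossCrack a ∧ p.2.2 < b} := by
  ext p
  exact ⟨fun ⟨⟨hsphere, hcrack, _⟩, hlt⟩ ↦ ⟨hsphere, hcrack, hlt⟩,
    fun ⟨hsphere, hcrack, hlt⟩ ↦ ⟨⟨hsphere, hcrack, hlt.ne⟩, hlt⟩⟩

theorem inter_levelRegion_some (s t : ℤˣ) :
    crackedSphereOffLevel a b ∩ levelRegion b (some (s, t)) =
      {p | p ∈ unitSphere2 ∧ ⟨p.1, p.2.1⟩ ∈ openQuadrant s t ∧ p.2.2 ∈ Ioo b 1} := by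
  ext p
  constructor
  · rintro ⟨⟨hsphere, -⟩, hgt, hquad⟩
    have hx : p.1 ≠ 0 := right_ne_zero_of_mul hquad.1.ne'
    have h : p.1 ^ 2 + p.2.1 ^ 2 + p.2.2 ^ 2 = 1 := hsphere
    exact ⟨hsphere, hquad, hgt, by nlinarith [sq_pos_of_ne_zero hx, sq_nonneg p.2.1]⟩
  · rintro ⟨hsphere, hquad, hgt, -⟩
    refine ⟨⟨hsphere, ?_, hgt.ne'⟩, hgt, hquad⟩
    rintro ⟨-, hx | hy, -⟩
    · exact right_ne_zero_of_mul hquad.1.ne' hx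
    · exact right_ne_zero_of_mul hquad.2.ne' hy

theorem isConnected_inter_levelRegion (ha : a < 2) (hb : b ∈ Ioo (-1) 1)
    (i : Option (ℤˣ × ℤˣ)) : IsConnected (crackedSphereOffLevel a b ∩ levelRegion b i) := by
  rcases i with _ | ⟨s, t⟩
  · rw [inter_levelRegion_none]
    exact isConnected_crackedSphere_below ha (Ioo_subset_Ioc_self hb)
  · rw [inter_levelRegion_some]
    exact isConnected_unitSphere2_sector (openQuadrant.isConnected s t)
      (openQuadrant.zero_notMem s t) (openQuadrant.smul_mem s t) (isConnected_Ioo hb.2)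
      (Ioo_subset_Ioo_left hb.1.le)

end crackedSphereOffLevel

end CrackedSphere

theorem five_components_cracked_sphere_general (a b : ℝ) (ha : a < 2) (hb₁ : 1 - a < b)
    (hb₂ : b < 1) :
    Nat.card (ConnectedComponents
      ↥{p : ℝ × ℝ × ℝ | p ∈ unitSphere2 ∧ p ∉ crossCrack a ∧ p.2.2 ≠ b}) = 5 := by
  have hb : b ∈ Ioo (-1) 1 := ⟨by linarith, hb₂⟩
  calc Nat.card (ConnectedComponents (crackedSphereOffLevel a b))
    _ = Nat.card (Option (ℤˣ × ℤˣ)) :=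
      card_connectedComponents_of_isConnected_inter levelRegion.isOpen
        (fun _ ↦ crackedSphereOffLevel.existsUnique_mem_levelRegion hb₁.le)
        (crackedSphereOffLevel.isConnected_inter_levelRegion ha hb)
    _ = 5 := by simp

/-- For `0 < a ≤ 1` and `1 − a < b < 1`, the complement in the cracked sphere
`S² \ K_a` of the level set `{z = b}` has exactly `5` connected components: the
counterexample to the Extended Courant Property for the sphere with cracks. -/
theorem five_components_cracked_sphere (a b : ℝ) (ha₀ : 0 < a) (ha₁ : a ≤ 1)
    (hb₁ : 1 - a < b) (hb₂ : b < 1) :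
    Nat.card (ConnectedComponents
      ↥{p : ℝ × ℝ × ℝ | p ∈ unitSphere2 ∧ p ∉ crossCrack a ∧ p.2.2 ≠ b}) = 5 := by
  exact five_components_cracked_sphere_general a b (by linarith) hb₁ hb₂
end
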